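/- The quantum wreath product of polynomial type B≀H(d) has a PBW basis: the 𝕜-linear map B^{⊗d} ⊗_𝕜 𝕜[S_d] → B≀H(d) sending b⊗w ↦ b·H_w is bijective, and likewise the map b⊗w ↦ H_w·b is bijective. In particular, for any 𝕜-basis {b_m} of B^{⊗d}, the sets {b_m·H_w : m, w ∈ S_d} and {H_w·b_m : m, w ∈ S_d} are 𝕜-bases of B≀H(d). -/

import Mathlib

open scoped TensorProduct
open PiTensorProduct MvPolynomial

variable (k F : Type*) (m : ℕ)

/-- Weak Frobenius elements of `F ⊗ F`: `(a⊗b)·Δ = Δ·(b⊗a)` for all `a, b ∈ F`. -/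
def IsWeakFrobenius [CommSemiring k] [Ring F] [Algebra k F] (Δ : F ⊗[k] F) : Prop :=
  ∀ a b : F, (a ⊗ₜ[k] b) * Δ = Δ * (b ⊗ₜ[k] a)

/-- Symmetric elements of `F ⊗ F`: fixed by the flip. -/
def IsSymmEl [CommSemiring k] [Ring F] [Algebra k F] (Δ : F ⊗[k] F) : Prop :=
  (Algebra.TensorProduct.comm k F F) Δ = Δ

section Emb3
variable [CommSemiring k] [Ring F] [Algebra k F]

/-- The embedding `F⊗F → F^{⊗3}` placing the two legs in positions 1, 2. -/
noncomputable def emb12 : F ⊗[k] F →ₗ[k] F ⊗[k] (F ⊗[k] F) :=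
  LinearMap.lTensor F ((TensorProduct.mk k F F).flip 1)

/-- The embedding `F⊗F → F^{⊗3}` placing the two legs in positions 2, 3. -/
noncomputable def emb23 : F ⊗[k] F →ₗ[k] F ⊗[k] (F ⊗[k] F) :=
  TensorProduct.mk k F (F ⊗[k] F) 1

end Emb3

section BD
variable [Field k] [Ring F] [Algebra k F]

/-- The tensor power `F^{⊗d}` for `d = m + 2`. -/
abbrev TPow := ⨂[k] (_ : Fin (m + 2)), F

/-- `B^{⊗d} = F^{⊗d}[x₁,…,x_d]`, modelled as `F^{⊗d} ⊗ 𝕜[x₁,…,x_d]`. -/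
abbrev BD := TPow k F m ⊗[k] MvPolynomial (Fin (m + 2)) k

/-- Insertion of `F` into the `j`-th tensor slot of `F^{⊗d}` (with `1` elsewhere). -/
noncomputable def ins (j : Fin (m + 2)) : F →ₗ[k] TPow k F m where
  toFun a := tprod k (Function.update (fun _ => (1 : F)) j a)
  map_add' a b := by
    simpa using MultilinearMap.map_update_add (tprod k) (fun _ => (1 : F)) j a b
  map_smul' c a := by
    simpa using MultilinearMap.map_update_smul (tprod k) (fun _ => (1 : F)) j c a

/-- The placement of `Y ∈ F⊗F` with its legs in tensor slots `i` and `j` of `F^{⊗d}`. -/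
noncomputable def place (i j : Fin (m + 2)) : F ⊗[k] F →ₗ[k] TPow k F m :=
  TensorProduct.lift
    ((LinearMap.mul k (TPow k F m)).compl₁₂ (ins k F m i) (ins k F m j))

/-- The place-permutation of the tensor slots `i, i+1` of `F^{⊗d}`. -/
noncomputable def sigmaT (i : Fin (m + 1)) : TPow k F m →ₗ[k] TPow k F m :=
  (PiTensorProduct.reindex k (fun _ => F)
      (Equiv.swap i.castSucc i.succ)).toLinearMap

/-- The automorphism `σ_i` of `B^{⊗d}`: swaps the tensor slots `i, i+1` of `F^{⊗d}`
and the variables `x_i, x_{i+1}`. -/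
noncomputable def sigmaB (i : Fin (m + 1)) : BD k F m →ₗ[k] BD k F m :=
  TensorProduct.map (sigmaT k F m i)
    (MvPolynomial.rename (⇑(Equiv.swap i.castSucc i.succ)) :
        MvPolynomial (Fin (m + 2)) k →ₐ[k] MvPolynomial (Fin (m + 2)) k).toLinearMap

/-- The variable `x_j` as an element of `B^{⊗d}`. -/
noncomputable def xv (j : Fin (m + 2)) : BD k F m :=
  (1 : TPow k F m) ⊗ₜ[k] (X j : MvPolynomial (Fin (m + 2)) k)

variable (Δf : Fin 2 → Fin 2 → F ⊗[k] F) (Rv : F ⊗[k] F)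

/-- `β_i ∈ B^{⊗d}`: `β` placed in slots `i, i+1` with variables `x_i, x_{i+1}`. -/
noncomputable def betaI (i : Fin (m + 1)) : BD k F m :=
  (place k F m i.castSucc i.succ (Δf 0 0)) ⊗ₜ[k] (1 : MvPolynomial (Fin (m + 2)) k)
    + (place k F m i.castSucc i.succ (Δf 1 0)) ⊗ₜ[k] (X i.castSucc)
    + (place k F m i.castSucc i.succ (Δf 0 1)) ⊗ₜ[k] (X i.succ)
    + (place k F m i.castSucc i.succ (Δf 1 1)) ⊗ₜ[k] (X i.castSucc * X i.succ)

/-- `S_i ∈ B^{⊗d}`: `S = Δ¹⁰ − Δ⁰¹` placed in slots `i, i+1`. -/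
noncomputable def SI (i : Fin (m + 1)) : BD k F m :=
  (place k F m i.castSucc i.succ (Δf 1 0 - Δf 0 1)) ⊗ₜ[k]
    (1 : MvPolynomial (Fin (m + 2)) k)

/-- `R_i ∈ B^{⊗d}`: `R` placed in slots `i, i+1`. -/
noncomputable def RI (i : Fin (m + 1)) : BD k F m :=
  (place k F m i.castSucc i.succ Rv) ⊗ₜ[k] (1 : MvPolynomial (Fin (m + 2)) k)

end BD

/-- The defining relations of the quantum wreath product of polynomial type
`B ≀ H(d)`, `d = m+2`: the algebra structure of `B^{⊗d}`, the braid relations,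
the quadratic relations and the wreath relations. -/
inductive QRel (k F : Type*) [Field k] [Ring F] [Algebra k F] (m : ℕ)
    (Δf : Fin 2 → Fin 2 → F ⊗[k] F) (Rv : F ⊗[k] F)
    (ρf : Fin (m + 1) → BD k F m →ₗ[k] BD k F m) :
    FreeAlgebra k (BD k F m ⊕ Fin (m + 1)) →
      FreeAlgebra k (BD k F m ⊕ Fin (m + 1)) → Prop
  | add_gen (a b : BD k F m) :
      QRel k F m Δf Rv ρf
        (FreeAlgebra.ι k (Sum.inl a) + FreeAlgebra.ι k (Sum.inl b))
        (FreeAlgebra.ι k (Sum.inl (a + b)))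
  | smul_gen (c : k) (a : BD k F m) :
      QRel k F m Δf Rv ρf (c • FreeAlgebra.ι k (Sum.inl a))
        (FreeAlgebra.ι k (Sum.inl (c • a)))
  | mul_gen (a b : BD k F m) :
      QRel k F m Δf Rv ρf
        (FreeAlgebra.ι k (Sum.inl a) * FreeAlgebra.ι k (Sum.inl b))
        (FreeAlgebra.ι k (Sum.inl (a * b)))
  | one_gen :
      QRel k F m Δf Rv ρf (FreeAlgebra.ι k (Sum.inl (1 : BD k F m))) 1
  | braid_far (i j : Fin (m + 1)) (h : (i : ℕ) + 2 ≤ (j : ℕ) ∨ (j : ℕ) + 2 ≤ (i : ℕ)) :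
      QRel k F m Δf Rv ρf
        (FreeAlgebra.ι k (Sum.inr i) * FreeAlgebra.ι k (Sum.inr j))
        (FreeAlgebra.ι k (Sum.inr j) * FreeAlgebra.ι k (Sum.inr i))
  | braid (i j : Fin (m + 1)) (h : (i : ℕ) + 1 = (j : ℕ)) :
      QRel k F m Δf Rv ρf
        (FreeAlgebra.ι k (Sum.inr i) * FreeAlgebra.ι k (Sum.inr j) *
          FreeAlgebra.ι k (Sum.inr i))
        (FreeAlgebra.ι k (Sum.inr j) * FreeAlgebra.ι k (Sum.inr i) *
          FreeAlgebra.ι k (Sum.inr j))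
  | quad (i : Fin (m + 1)) :
      QRel k F m Δf Rv ρf
        (FreeAlgebra.ι k (Sum.inr i) * FreeAlgebra.ι k (Sum.inr i))
        (FreeAlgebra.ι k (Sum.inl (SI k F m Δf i)) * FreeAlgebra.ι k (Sum.inr i)
          + FreeAlgebra.ι k (Sum.inl (RI k F m Rv i)))
  | wreath (i : Fin (m + 1)) (b : BD k F m) :
      QRel k F m Δf Rv ρf
        (FreeAlgebra.ι k (Sum.inr i) * FreeAlgebra.ι k (Sum.inl b))
        (FreeAlgebra.ι k (Sum.inl (sigmaB k F m i b)) * FreeAlgebra.ι k (Sum.inr i)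
          + FreeAlgebra.ι k (Sum.inl (ρf i b)))

section QWPdefs
variable [Field k] [Ring F] [Algebra k F]
variable (Δf : Fin 2 → Fin 2 → F ⊗[k] F) (Rv : F ⊗[k] F)
variable (ρf : Fin (m + 1) → BD k F m →ₗ[k] BD k F m)

/-- The quantum wreath product of polynomial type, presented by generators and
relations. -/
abbrev QWP := RingQuot (QRel k F m Δf Rv ρf)

/-- The canonical map `B^{⊗d} → B ≀ H(d)`. -/
noncomputable def embB (b : BD k F m) : QWP k F m Δf Rv ρf :=
  RingQuot.mkAlgHom k (QRel k F m Δf Rv ρf) (FreeAlgebra.ι k (Sum.inl b))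

/-- The Hecke-like generator `H_i ∈ B ≀ H(d)`. -/
noncomputable def genH (i : Fin (m + 1)) : QWP k F m Δf Rv ρf :=
  RingQuot.mkAlgHom k (QRel k F m Δf Rv ρf) (FreeAlgebra.ι k (Sum.inr i))

/-- The simple transposition `s_i = (i, i+1) ∈ S_d`, `d = m+2`. -/
def swPerm (i : Fin (m + 1)) : Equiv.Perm (Fin (m + 2)) :=
  Equiv.swap i.castSucc i.succ

/-- The number of inversions (Coxeter length) of a permutation. -/
noncomputable def invCount (w : Equiv.Perm (Fin (m + 2))) : ℕ :=
  (Finset.univ.filter fun p : Fin (m + 2) × Fin (m + 2) =>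
    p.1 < p.2 ∧ w p.2 < w p.1).card

/-- `L` is a reduced expression for `w`. -/
def IsReducedWord (L : List (Fin (m + 1))) (w : Equiv.Perm (Fin (m + 2))) : Prop :=
  (L.map (swPerm m)).prod = w ∧ L.length = invCount m w

end QWPdefs

/-!
The relations of `B ≀ H(d)` let one move all of `B^{⊗d}` to one side of a word in the `H_i` and
replace the word by reduced ones, so the elements `b * H_w` span, and so do the `H_w * b`.

For independence, invert the differences of the variables and put `g_ij = β_ij / (x_i - x_j)`. Then
`ρ_i(b) = g_{i,i+1} b - σ_i(b) g_{i,i+1}`, and the Frobenius property and (A2) give the three-term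
relations `g_ac g_ba + g_ab g_bc = g_bc g_ac` and `g_ab g_ac = g_ac g_cb + g_bc g_ab`. Moreover
`Q_ij = R_ij + g_ji g_ij` is central, and for every equivariant central splitting
`K_ij K_ji = Q_ij` the operators `H_i ↦ g_{i,i+1} + K_{i,i+1} s_i` satisfy all the relations.

A square root of `Q_ij` need not exist, but over functions from the symmetric group to
`F^{⊗d}(x₁, …, x_d)` there is always a splitting: at `u`, let `K_ij` be `1` if `u⁻¹ j < u⁻¹ i` and
`Q_ij` otherwise. If `δ` denotes the indicator function of the identity, `H_w δ` then takes the
value `1` at `w` and vanishes at every other `u` of length at least that of `w`. This triangularity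
gives independence.
-/

namespace QuantumWreath

section Inversions
variable {m}

theorem swPerm_mul_self (i : Fin (m + 1)) : swPerm m i * swPerm m i = 1 :=
  Equiv.swap_mul_self _ _

theorem swPerm_mul_self_mul (i : Fin (m + 1)) (u : Equiv.Perm (Fin (m + 2))) :
    swPerm m i * (swPerm m i * u) = u :=
  Equiv.swap_mul_self_mul _ _ _

theorem inv_swPerm (i : Fin (m + 1)) : (swPerm m i)⁻¹ = swPerm m i :=
  Equiv.swap_inv _ _

theorem swPerm_lt_swPerm_iff (i : Fin (m + 1)) {a b : Fin (m + 2)} (hab : a ≠ b) :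
    swPerm m i a < swPerm m i b ↔
      (b = i.castSucc ∧ a = i.succ) ∨ (a < b ∧ ¬ (a = i.castSucc ∧ b = i.succ)) := by
  have := Fin.val_ne_of_ne hab
  simp only [swPerm, Equiv.swap_apply_def]
  split_ifs <;>
    simp only [Fin.lt_def, Fin.ext_iff, Fin.val_castSucc, Fin.val_succ] at * <;> omega

theorem invCount_swPerm_mul_of_lt {i : Fin (m + 1)} {u : Equiv.Perm (Fin (m + 2))}
    (h : u⁻¹ i.castSucc < u⁻¹ i.succ) :
    invCount m (swPerm m i * u) = invCount m u + 1 := by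
  have not_inversion : ((u⁻¹ i.castSucc, u⁻¹ i.succ) : Fin (m + 2) × Fin (m + 2)) ∉
      Finset.univ.filter fun p : Fin (m + 2) × Fin (m + 2) => p.1 < p.2 ∧ u p.2 < u p.1 := by
    simpa using fun _ => (Fin.castSucc_lt_succ (i := i)).le
  rw [invCount, invCount, ← Finset.card_insert_of_notMem not_inversion]
  congr 1
  ext ⟨a, b⟩
  rw [Finset.mem_insert, Finset.mem_filter, Finset.mem_filter]
  simp only [Finset.mem_univ, true_and, Prod.mk.injEq, Equiv.Perm.mul_apply,
    Equiv.Perm.eq_inv_iff_eq]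
  constructor
  · rintro ⟨hab, hlt⟩
    rw [swPerm_lt_swPerm_iff i (u.injective.ne hab.ne')] at hlt
    exact hlt.imp_right fun hlt => ⟨hab, hlt.1⟩
  · rintro (⟨ha, hb⟩ | ⟨hab, hlt⟩)
    · rw [swPerm_lt_swPerm_iff i (by simp [ha, hb, Fin.ext_iff])]
      exact ⟨by simpa [← ha, ← hb] using h, Or.inl ⟨ha, hb⟩⟩
    · refine ⟨hab, (swPerm_lt_swPerm_iff i hlt.ne).2 (Or.inr ⟨hlt, ?_⟩)⟩
      rintro ⟨hb, ha⟩
      exact hab.not_gt (by simpa [← ha, ← hb] using h)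

theorem invCount_swPerm_mul_of_gt {i : Fin (m + 1)} {u : Equiv.Perm (Fin (m + 2))}
    (h : u⁻¹ i.succ < u⁻¹ i.castSucc) :
    invCount m u = invCount m (swPerm m i * u) + 1 := by
  have h' : (swPerm m i * u)⁻¹ i.castSucc < (swPerm m i * u)⁻¹ i.succ := by
    simpa [mul_inv_rev, inv_swPerm, swPerm] using h
  simpa only [swPerm_mul_self_mul] using invCount_swPerm_mul_of_lt h'

theorem inv_castSucc_lt_or_gt (u : Equiv.Perm (Fin (m + 2))) (i : Fin (m + 1)) :
    u⁻¹ i.castSucc < u⁻¹ i.succ ∨ u⁻¹ i.succ < u⁻¹ i.castSucc :=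
  lt_or_gt_of_ne (u⁻¹.injective.ne (Fin.castSucc_lt_succ (i := i)).ne)

theorem invCount_swPerm_mul_or (i : Fin (m + 1)) (u : Equiv.Perm (Fin (m + 2))) :
    invCount m (swPerm m i * u) = invCount m u + 1 ∨
      invCount m u = invCount m (swPerm m i * u) + 1 :=
  (inv_castSucc_lt_or_gt u i).imp invCount_swPerm_mul_of_lt invCount_swPerm_mul_of_gt

theorem invCount_one : invCount m 1 = 0 := by
  rw [invCount, Finset.card_eq_zero, Finset.filter_eq_empty_iff]
  exact fun p _ h => h.1.not_gt h.2

theorem invCount_inv (w : Equiv.Perm (Fin (m + 2))) : invCount m w⁻¹ = invCount m w := by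
  refine Finset.card_equiv ((Equiv.prodComm _ _).trans (Equiv.prodCongr w⁻¹ w⁻¹)) fun p => ?_
  simp [and_comm]

theorem invCount_mul_swPerm_or (u : Equiv.Perm (Fin (m + 2))) (i : Fin (m + 1)) :
    invCount m (u * swPerm m i) = invCount m u + 1 ∨
      invCount m u = invCount m (u * swPerm m i) + 1 := by
  have hinv : (u * swPerm m i)⁻¹ = swPerm m i * u⁻¹ := by rw [mul_inv_rev, inv_swPerm]
  rw [← invCount_inv u, ← invCount_inv (u * swPerm m i), hinv]
  exact invCount_swPerm_mul_or i u⁻¹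

theorem exists_inv_succ_lt_inv_castSucc {w : Equiv.Perm (Fin (m + 2))} (hw : w ≠ 1) :
    ∃ i : Fin (m + 1), w⁻¹ i.succ < w⁻¹ i.castSucc := by
  contrapose! hw
  have strictMono_inv : StrictMono ⇑w⁻¹ :=
    Fin.strictMono_iff_lt_succ.2 fun i => (inv_castSucc_lt_or_gt w i).resolve_right (hw i).not_gt
  exact inv_eq_one.1 (DFunLike.coe_injective strictMono_inv.eq_id)

theorem swPerm_induction {p : Equiv.Perm (Fin (m + 2)) → Prop} (one : p 1)
    (swPerm_mul : ∀ i w, invCount m (swPerm m i * w) = invCount m w + 1 → p w →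
      p (swPerm m i * w)) (w : Equiv.Perm (Fin (m + 2))) : p w := by
  induction hn : invCount m w using Nat.strong_induction_on generalizing w with
  | _ n ih =>
    subst hn
    by_cases hw : w = 1
    · exact hw ▸ one
    · obtain ⟨i, hi⟩ := exists_inv_succ_lt_inv_castSucc hw
      have hlen := invCount_swPerm_mul_of_gt hi
      have := swPerm_mul i (swPerm m i * w) (by rw [swPerm_mul_self_mul, hlen])
        (ih _ (by omega) _ rfl)
      rwa [swPerm_mul_self_mul] at this

theorem exists_isReducedWord (w : Equiv.Perm (Fin (m + 2))) : ∃ L, IsReducedWord m L w := by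
  induction w using swPerm_induction with
  | one => exact ⟨[], rfl, invCount_one.symm⟩
  | swPerm_mul i w h ih =>
    obtain ⟨L, rfl, hL⟩ := ih
    exact ⟨i :: L, List.prod_cons, by rw [List.length_cons, hL, h]⟩

/-- `H` extends the assignment `s` of a monoid element to each simple transposition by the
products over reduced words: `H w = s i₁ ⋯ s iₙ` for every reduced word `i₁, …, iₙ` of `w`. -/
def IsReducedLift {M : Type*} [Monoid M] (s : Fin (m + 1) → M)
    (H : Equiv.Perm (Fin (m + 2)) → M) : Prop :=
  ∀ w L, IsReducedWord m L w → H w = (L.map s).prod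

namespace IsReducedLift

variable {M N : Type*} [Monoid M] [Monoid N] {s : Fin (m + 1) → M}
  {H : Equiv.Perm (Fin (m + 2)) → M}

theorem one (hH : IsReducedLift s H) : H 1 = 1 :=
  hH 1 [] ⟨rfl, invCount_one.symm⟩

theorem swPerm_mul (hH : IsReducedLift s H) {i : Fin (m + 1)} {w : Equiv.Perm (Fin (m + 2))}
    (h : invCount m (swPerm m i * w) = invCount m w + 1) : H (swPerm m i * w) = s i * H w := by
  obtain ⟨L, hL⟩ := exists_isReducedWord w
  have hiL : IsReducedWord m (i :: L) (swPerm m i * w) :=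
    ⟨by simp [hL.1], by rw [List.length_cons, hL.2, h]⟩
  rw [hH _ _ hiL, hH _ _ hL, List.map_cons, List.prod_cons]

theorem mul_swPerm (hH : IsReducedLift s H) {i : Fin (m + 1)} {w : Equiv.Perm (Fin (m + 2))}
    (h : invCount m (w * swPerm m i) = invCount m w + 1) : H (w * swPerm m i) = H w * s i := by
  obtain ⟨L, hL⟩ := exists_isReducedWord w
  have hLi : IsReducedWord m (L ++ [i]) (w * swPerm m i) :=
    ⟨by simp [hL.1], by simp [hL.2, h]⟩
  rw [hH _ _ hLi, hH _ _ hL]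
  simp

theorem map (hH : IsReducedLift s H) (f : M →* N) :
    IsReducedLift (f ∘ s) (f ∘ H) := fun w L hL => by
  simp [hH w L hL, map_list_prod]

end IsReducedLift

end Inversions

section FinsuppLSum

variable {R ι N : Type*} [CommRing R] [AddCommGroup N] [Module R N]

theorem lsum_injective_of_triangular {α V W : Type*} [LinearOrder α] [AddCommGroup V] [Module R V]
    [AddCommGroup W] [Module R W] {T : ι → N →ₗ[R] V} (E : V →ₗ[R] (ι → W)) (ℓ : ι → α)
    (diag : ∀ i x, E (T i x) i = 0 → x = 0)
    (off_diag : ∀ i j x, j ≠ i → ℓ i ≤ ℓ j → E (T i x) j = 0) :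
    Function.Injective (Finsupp.lsum R T) := by
  rw [injective_iff_map_eq_zero]
  intro f hf
  by_contra hne
  obtain ⟨i, hi, hmax⟩ :=
    Finset.exists_max_image f.support ℓ (Finsupp.support_nonempty_iff.2 hne)
  have value_at_i : E (T i (f i)) i = 0 := by
    have h := congrFun (congrArg E hf) i
    rwa [Finsupp.lsum_apply, Finsupp.sum, map_sum, map_zero, Finset.sum_apply,
      Finset.sum_eq_single_of_mem i hi fun j hj hji => off_diag j i _ hji.symm (hmax j hj)] at h
  exact Finsupp.mem_support_iff.1 hi (diag i _ value_at_i)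

variable {A : Type*} [Ring A] [Algebra R A] {T : ι → N →ₗ[R] A} {s : Set A}

theorem map_mem_range_lsum {E : A →ₗ[R] A}
    (h : ∀ i x, E (T i x) ∈ LinearMap.range (Finsupp.lsum R T))
    {y : A} (hy : y ∈ LinearMap.range (Finsupp.lsum R T)) :
    E y ∈ LinearMap.range (Finsupp.lsum R T) := by
  obtain ⟨f, rfl⟩ := hy
  rw [Finsupp.lsum_apply, Finsupp.sum, map_sum]
  exact Submodule.sum_mem _ fun i _ => h i _

theorem lsum_surjective_of_mul_mem (hs : Algebra.adjoin R s = ⊤)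
    (one_mem : 1 ∈ LinearMap.range (Finsupp.lsum R T))
    (mul_mem : ∀ a ∈ s, ∀ i x, a * T i x ∈ LinearMap.range (Finsupp.lsum R T)) :
    Function.Surjective (Finsupp.lsum R T) := by
  have stable : ∀ a, ∀ y ∈ LinearMap.range (Finsupp.lsum R T),
      a * y ∈ LinearMap.range (Finsupp.lsum R T) := fun a => by
    induction (hs ▸ Algebra.mem_top : a ∈ Algebra.adjoin R s) using Algebra.adjoin_induction with
    | mem a ha =>
      exact fun y hy => map_mem_range_lsum (E := LinearMap.mulLeft R a) (mul_mem a ha) hy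
    | algebraMap r => exact fun y hy => Algebra.smul_def r y ▸ Submodule.smul_mem _ r hy
    | add a b _ _ iha ihb => exact fun y hy => add_mul a b y ▸ add_mem (iha y hy) (ihb y hy)
    | mul a b _ _ iha ihb => exact fun y hy => mul_assoc a b y ▸ iha _ (ihb y hy)
  exact fun a => mul_one a ▸ stable a 1 one_mem

theorem lsum_surjective_of_mem_mul (hs : Algebra.adjoin R s = ⊤)
    (one_mem : 1 ∈ LinearMap.range (Finsupp.lsum R T))
    (mem_mul : ∀ a ∈ s, ∀ i x, T i x * a ∈ LinearMap.range (Finsupp.lsum R T)) :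
    Function.Surjective (Finsupp.lsum R T) := by
  have stable : ∀ a, ∀ y ∈ LinearMap.range (Finsupp.lsum R T),
      y * a ∈ LinearMap.range (Finsupp.lsum R T) := fun a => by
    induction (hs ▸ Algebra.mem_top : a ∈ Algebra.adjoin R s) using Algebra.adjoin_induction with
    | mem a ha =>
      exact fun y hy => map_mem_range_lsum (E := LinearMap.mulRight R a) (mem_mul a ha) hy
    | algebraMap r =>
      exact fun y hy => Algebra.commutes r y ▸ Algebra.smul_def r y ▸ Submodule.smul_mem _ r hy
    | add a b _ _ iha ihb => exact fun y hy => mul_add y a b ▸ add_mem (iha y hy) (ihb y hy)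
    | mul a b _ _ iha ihb => exact fun y hy => mul_assoc y a b ▸ ihb _ (iha y hy)
  exact fun a => one_mul a ▸ stable a 1 one_mem

end FinsuppLSum

section Spanning

variable [Field k] [Ring F] [Algebra k F]
variable (Δf : Fin 2 → Fin 2 → F ⊗[k] F) (Rv : F ⊗[k] F)
variable (ρf : Fin (m + 1) → BD k F m →ₗ[k] BD k F m)

/-- The canonical map `B^{⊗d} → B ≀ H(d)` as an algebra homomorphism. -/
noncomputable def embHom : BD k F m →ₐ[k] QWP k F m Δf Rv ρf :=
  AlgHom.ofLinearMap
    { toFun := embB k F m Δf Rv ρf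
      map_add' := fun a b =>
        (RingQuot.mkAlgHom_rel k (QRel.add_gen a b)).symm.trans (map_add _ _ _)
      map_smul' := fun c a =>
        (RingQuot.mkAlgHom_rel k (QRel.smul_gen c a)).symm.trans (map_smul _ _ _) }
    ((RingQuot.mkAlgHom_rel k QRel.one_gen).trans (map_one _))
    (fun a b => (RingQuot.mkAlgHom_rel k (QRel.mul_gen a b)).symm.trans (map_mul _ _ _))

variable {k F m Δf Rv ρf}

theorem genH_mul_embHom (i : Fin (m + 1)) (b : BD k F m) :
    genH k F m Δf Rv ρf i * embHom k F m Δf Rv ρf b =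
      embHom k F m Δf Rv ρf (sigmaB k F m i b) * genH k F m Δf Rv ρf i +
        embHom k F m Δf Rv ρf (ρf i b) := by
  have h := RingQuot.mkAlgHom_rel k (QRel.wreath (Δf := Δf) (Rv := Rv) (ρf := ρf) i b)
  rwa [map_add, map_mul, map_mul] at h

theorem genH_mul_genH (i : Fin (m + 1)) :
    genH k F m Δf Rv ρf i * genH k F m Δf Rv ρf i =
      embHom k F m Δf Rv ρf (SI k F m Δf i) * genH k F m Δf Rv ρf i +
        embHom k F m Δf Rv ρf (RI k F m Rv i) := by
  have h := RingQuot.mkAlgHom_rel k (QRel.quad (Δf := Δf) (Rv := Rv) (ρf := ρf) i)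
  rwa [map_add, map_mul, map_mul] at h

theorem sigmaB_sigmaB (i : Fin (m + 1)) (b : BD k F m) :
    sigmaB k F m i (sigmaB k F m i b) = b := by
  have hT : sigmaT k F m i ∘ₗ sigmaT k F m i = LinearMap.id := by
    ext a
    simp [sigmaT]
  have hX : (rename (R := k) (Equiv.swap i.castSucc i.succ)).toLinearMap ∘ₗ
      (rename (Equiv.swap i.castSucc i.succ)).toLinearMap = LinearMap.id := by
    refine LinearMap.ext fun p => ?_
    have hswap : Equiv.swap i.castSucc i.succ ∘ Equiv.swap i.castSucc i.succ = id :=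
      funext (DFunLike.congr_fun (Equiv.swap_swap _ _))
    rw [LinearMap.comp_apply, AlgHom.toLinearMap_apply, AlgHom.toLinearMap_apply, rename_rename,
      hswap, rename_id_apply, LinearMap.id_apply]
  rw [← LinearMap.comp_apply, sigmaB, ← TensorProduct.map_comp, hT, hX, TensorProduct.map_id,
    LinearMap.id_apply]

theorem embHom_mul_genH (i : Fin (m + 1)) (b : BD k F m) :
    embHom k F m Δf Rv ρf b * genH k F m Δf Rv ρf i =
      genH k F m Δf Rv ρf i * embHom k F m Δf Rv ρf (sigmaB k F m i b) -
        embHom k F m Δf Rv ρf (ρf i (sigmaB k F m i b)) := by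
  rw [genH_mul_embHom, sigmaB_sigmaB, add_sub_cancel_right]

theorem adjoin_range_embHom_union_range_genH :
    Algebra.adjoin k (Set.range (embHom k F m Δf Rv ρf) ∪ Set.range (genH k F m Δf Rv ρf)) = ⊤ := by
  have hrange : Set.range (embHom k F m Δf Rv ρf) ∪ Set.range (genH k F m Δf Rv ρf) =
      RingQuot.mkAlgHom k (QRel k F m Δf Rv ρf) '' Set.range (FreeAlgebra.ι k) := by
    rw [← Set.range_comp, ← Set.Sum.elim_range]
    congr 1
    ext (b | i) <;> rfl
  rw [hrange, ← AlgHom.map_adjoin, FreeAlgebra.adjoin_range_ι, Algebra.map_top,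
    AlgHom.range_eq_top]
  exact RingQuot.mkAlgHom_surjective k _

variable (H : Equiv.Perm (Fin (m + 2)) → QWP k F m Δf Rv ρf)

/-- The map `b ⊗ w ↦ b * H w`. -/
noncomputable def pbwLeft : (Equiv.Perm (Fin (m + 2)) →₀ BD k F m) →ₗ[k] QWP k F m Δf Rv ρf :=
  Finsupp.lsum k fun w => LinearMap.mulRight k (H w) ∘ₗ (embHom k F m Δf Rv ρf).toLinearMap

/-- The map `b ⊗ w ↦ H w * b`. -/
noncomputable def pbwRight : (Equiv.Perm (Fin (m + 2)) →₀ BD k F m) →ₗ[k] QWP k F m Δf Rv ρf :=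
  Finsupp.lsum k fun w => LinearMap.mulLeft k (H w) ∘ₗ (embHom k F m Δf Rv ρf).toLinearMap

theorem embHom_mul_mem_range_pbwLeft (b : BD k F m) (w : Equiv.Perm (Fin (m + 2))) :
    embHom k F m Δf Rv ρf b * H w ∈ LinearMap.range (pbwLeft H) :=
  ⟨Finsupp.single w b, Finsupp.lsum_single k _ _ _⟩

theorem mul_embHom_mem_range_pbwRight (w : Equiv.Perm (Fin (m + 2))) (b : BD k F m) :
    H w * embHom k F m Δf Rv ρf b ∈ LinearMap.range (pbwRight H) :=
  ⟨Finsupp.single w b, Finsupp.lsum_single k _ _ _⟩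

variable {H}

theorem exists_genH_mul_eq (hH : IsReducedLift (genH k F m Δf Rv ρf) H) (i : Fin (m + 1))
    (w : Equiv.Perm (Fin (m + 2))) : ∃ a b, genH k F m Δf Rv ρf i * H w =
      embHom k F m Δf Rv ρf a * H w + embHom k F m Δf Rv ρf b * H (swPerm m i * w) := by
  rcases invCount_swPerm_mul_or i w with h | h
  · exact ⟨0, 1, by rw [map_zero, map_one, zero_mul, zero_add, one_mul, hH.swPerm_mul h]⟩
  · refine ⟨SI k F m Δf i, RI k F m Rv i, ?_⟩
    have hw := hH.swPerm_mul (i := i) (w := swPerm m i * w) (by rwa [swPerm_mul_self_mul])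
    rw [swPerm_mul_self_mul] at hw
    rw [hw, ← mul_assoc, genH_mul_genH, add_mul, mul_assoc]

theorem exists_mul_genH_eq (hH : IsReducedLift (genH k F m Δf Rv ρf) H)
    (w : Equiv.Perm (Fin (m + 2))) (i : Fin (m + 1)) : ∃ a b, H w * genH k F m Δf Rv ρf i =
      H w * embHom k F m Δf Rv ρf a + H (w * swPerm m i) * embHom k F m Δf Rv ρf b := by
  rcases invCount_mul_swPerm_or w i with h | h
  · exact ⟨0, 1, by rw [map_zero, map_one, mul_zero, zero_add, mul_one, hH.mul_swPerm h]⟩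
  · have hws : w * swPerm m i * swPerm m i = w := by rw [mul_assoc, swPerm_mul_self, mul_one]
    have hw := hH.mul_swPerm (i := i) (w := w * swPerm m i) (by rwa [hws])
    rw [hws] at hw
    refine ⟨sigmaB k F m i (SI k F m Δf i),
      RI k F m Rv i - ρf i (sigmaB k F m i (SI k F m Δf i)), ?_⟩
    rw [hw, mul_assoc, genH_mul_genH, embHom_mul_genH, map_sub]
    noncomm_ring

theorem pbwLeft_surjective (hH : IsReducedLift (genH k F m Δf Rv ρf) H) :
    Function.Surjective (pbwLeft H) := by
  refine lsum_surjective_of_mul_mem adjoin_range_embHom_union_range_genH ?_ ?_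
  · have h1 := embHom_mul_mem_range_pbwLeft H 1 1
    rwa [map_one, one_mul, hH.one] at h1
  · rintro _ (⟨b, rfl⟩ | ⟨i, rfl⟩) w c
    · have hbc := embHom_mul_mem_range_pbwLeft H (b * c) w
      rwa [map_mul, mul_assoc] at hbc
    · obtain ⟨a, b, hab⟩ := exists_genH_mul_eq hH i w
      have expand : genH k F m Δf Rv ρf i * (embHom k F m Δf Rv ρf c * H w) =
          embHom k F m Δf Rv ρf (sigmaB k F m i c * a + ρf i c) * H w +
            embHom k F m Δf Rv ρf (sigmaB k F m i c * b) * H (swPerm m i * w) := by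
        rw [← mul_assoc, genH_mul_embHom, add_mul, mul_assoc, hab, map_add, map_mul, map_mul]
        noncomm_ring
      exact Set.mem_of_eq_of_mem expand (add_mem (embHom_mul_mem_range_pbwLeft H _ _)
        (embHom_mul_mem_range_pbwLeft H _ _))

theorem pbwRight_surjective (hH : IsReducedLift (genH k F m Δf Rv ρf) H) :
    Function.Surjective (pbwRight H) := by
  refine lsum_surjective_of_mem_mul adjoin_range_embHom_union_range_genH ?_ ?_
  · have h1 := mul_embHom_mem_range_pbwRight H 1 1
    rwa [map_one, mul_one, hH.one] at h1
  · rintro _ (⟨b, rfl⟩ | ⟨i, rfl⟩) w c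
    · have hcb := mul_embHom_mem_range_pbwRight H w (c * b)
      rwa [map_mul, ← mul_assoc] at hcb
    · obtain ⟨a, b, hab⟩ := exists_mul_genH_eq hH w i
      have expand : H w * embHom k F m Δf Rv ρf c * genH k F m Δf Rv ρf i =
          H w * embHom k F m Δf Rv ρf (a * sigmaB k F m i c - ρf i (sigmaB k F m i c)) +
            H (w * swPerm m i) * embHom k F m Δf Rv ρf (b * sigmaB k F m i c) := by
        simp only [mul_assoc, embHom_mul_genH, mul_sub, map_sub, map_mul]
        rw [← mul_assoc (H w), hab]
        simp only [add_mul, mul_assoc]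
        abel
      exact Set.mem_of_eq_of_mem expand (add_mem (mul_embHom_mem_range_pbwRight H _ _)
        (mul_embHom_mem_range_pbwRight H _ _))

end Spanning

section DemazureLusztig

variable {κ A I : Type*} [CommRing κ] [Ring A] [Algebra κ A]

/-- A family `G i j` of ring elements is equivariant for an action `τ` of the permutations of its
index set if `τ` permutes it by acting on both indices. -/
def IsEquivariant (τ : Equiv.Perm I →* (A →ₐ[κ] A)) (G : I → I → A) : Prop :=
  ∀ w i j, τ w (G i j) = G (w i) (w j)

theorem map_inv_map {G : Type*} [Group G] (τ : G →* (A →ₐ[κ] A)) (w : G) (y : A) :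
    τ w⁻¹ (τ w y) = y := by
  rw [← AlgHom.mul_apply, ← map_mul, inv_mul_cancel, map_one, AlgHom.one_apply]

variable [DecidableEq I] {τ : Equiv.Perm I →* (A →ₐ[κ] A)}

theorem map_swap_map_swap (τ : Equiv.Perm I →* (A →ₐ[κ] A)) (a b : I) (y : A) :
    τ (Equiv.swap a b) (τ (Equiv.swap a b) y) = y := by
  simpa only [Equiv.swap_inv] using map_inv_map τ (Equiv.swap a b) y

/-- The Demazure–Lusztig operator `y ↦ G i j * y + K i j * τ (i j) y`. -/
noncomputable def demazureLusztig (τ : Equiv.Perm I →* (A →ₐ[κ] A)) (G K : I → I → A) (i j : I) :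
    Module.End κ A :=
  LinearMap.mulLeft κ (G i j) + LinearMap.mulLeft κ (K i j) ∘ₗ (τ (Equiv.swap i j)).toLinearMap

variable {G K : I → I → A}

theorem demazureLusztig_apply (i j : I) (y : A) :
    demazureLusztig τ G K i j y = G i j * y + K i j * τ (Equiv.swap i j) y := rfl

theorem demazureLusztig_mul_mulLeft (hK : ∀ i j y, Commute (K i j) y) {i j : I} {y z : A}
    (h : G i j * y = τ (Equiv.swap i j) y * G i j + z) :
    demazureLusztig τ G K i j * LinearMap.mulLeft κ y =
      LinearMap.mulLeft κ (τ (Equiv.swap i j) y) * demazureLusztig τ G K i j +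
        LinearMap.mulLeft κ z := by
  ext x
  simp only [Module.End.mul_apply, demazureLusztig_apply, LinearMap.add_apply,
    LinearMap.mulLeft_apply, map_mul]
  linear_combination (norm := noncomm_ring) h * x +
    (hK i j (τ (Equiv.swap i j) y)).eq * τ (Equiv.swap i j) x

theorem demazureLusztig_mul_self (hG : IsEquivariant τ G) (hK : IsEquivariant τ K)
    (hKc : ∀ i j y, Commute (K i j) y) {i j : I} {R : A}
    (hR : K i j * K j i = R + G j i * G i j) :
    demazureLusztig τ G K i j * demazureLusztig τ G K i j =
      LinearMap.mulLeft κ (G i j + G j i) * demazureLusztig τ G K i j +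
        LinearMap.mulLeft κ R := by
  ext x
  simp only [Module.End.mul_apply, demazureLusztig_apply, LinearMap.add_apply,
    LinearMap.mulLeft_apply, map_add, map_mul, hG _ _ _, hK _ _ _, Equiv.swap_apply_left,
    Equiv.swap_apply_right, map_swap_map_swap]
  linear_combination (norm := noncomm_ring) hR * x +
    (hKc i j (G j i)).eq * τ (Equiv.swap i j) x

theorem demazureLusztig_commute (hG : IsEquivariant τ G) (hK : IsEquivariant τ K)
    (hKc : ∀ i j y, Commute (K i j) y) {a b c d : I} (hac : a ≠ c) (had : a ≠ d) (hbc : b ≠ c)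
    (hbd : b ≠ d) (h : Commute (G a b) (G c d)) :
    Commute (demazureLusztig τ G K a b) (demazureLusztig τ G K c d) := by
  ext x
  have swap_comm : τ (Equiv.swap a b) (τ (Equiv.swap c d) x) =
      τ (Equiv.swap c d) (τ (Equiv.swap a b) x) := by
    rw [← AlgHom.mul_apply, ← AlgHom.mul_apply, ← map_mul, ← map_mul, Equiv.mul_swap_eq_swap_mul,
      Equiv.swap_apply_of_ne_of_ne hac.symm hbc.symm,
      Equiv.swap_apply_of_ne_of_ne had.symm hbd.symm]
  simp only [Module.End.mul_apply, demazureLusztig_apply, map_add, map_mul, hG _ _ _, hK _ _ _,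
    Equiv.swap_apply_of_ne_of_ne hac.symm hbc.symm, Equiv.swap_apply_of_ne_of_ne had.symm hbd.symm,
    Equiv.swap_apply_of_ne_of_ne hac had, Equiv.swap_apply_of_ne_of_ne hbc hbd, swap_comm]
  linear_combination (norm := noncomm_ring) h.eq * x -
    (hKc c d (G a b)).eq * τ (Equiv.swap c d) x + (hKc a b (G c d)).eq * τ (Equiv.swap a b) x +
    (hKc a b (K c d)).eq * τ (Equiv.swap c d) (τ (Equiv.swap a b) x)

theorem demazureLusztig_braid (hG : IsEquivariant τ G) (hK : IsEquivariant τ K)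
    (hKc : ∀ i j y, Commute (K i j) y) {a b c : I} (hab : a ≠ b) (hbc : b ≠ c) (hac : a ≠ c)
    (three_term_left : G a c * G b a + G a b * G b c = G b c * G a c)
    (three_term_right : G a b * G a c = G a c * G c b + G b c * G a b)
    (braid : G a b * G b c * G a b + G a c * (K a b * K b a) =
      G b c * G a b * G b c + G a c * (K b c * K c b)) :
    demazureLusztig τ G K a b * demazureLusztig τ G K b c * demazureLusztig τ G K a b =
      demazureLusztig τ G K b c * demazureLusztig τ G K a b * demazureLusztig τ G K b c := by
  ext x
  have swap_braid : τ (Equiv.swap a b) (τ (Equiv.swap b c) (τ (Equiv.swap a b) x)) =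
      τ (Equiv.swap b c) (τ (Equiv.swap a b) (τ (Equiv.swap b c) x)) := by
    have h := (Equiv.swap_mul_swap_mul_swap hab hac).trans
      ((Equiv.swap_comm c a).trans (Equiv.swap_mul_swap_mul_swap hbc.symm hac.symm).symm)
    rw [Equiv.swap_comm b a, Equiv.swap_comm c b] at h
    simp only [← AlgHom.mul_apply, ← map_mul, ← mul_assoc, h]
  simp only [Module.End.mul_apply, demazureLusztig_apply, map_add, map_mul, hG _ _ _, hK _ _ _,
    Equiv.swap_apply_left, Equiv.swap_apply_right,
    Equiv.swap_apply_of_ne_of_ne hac.symm hbc.symm, Equiv.swap_apply_of_ne_of_ne hab hac,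
    map_swap_map_swap, swap_braid]
  set sab := τ (Equiv.swap a b)
  set sbc := τ (Equiv.swap b c)
  have coeff_one : G a b * G b c * G a b + K a b * G a c * K b a =
      G b c * G a b * G b c + K b c * G a c * K c b := by
    linear_combination (norm := noncomm_ring) braid + (hKc a b (G a c)).eq * K b a -
      (hKc b c (G a c)).eq * K c b
  have coeff_sab : G a b * G b c * K a b + K a b * G a c * G b a = G b c * K a b * G a c := by
    linear_combination (norm := noncomm_ring) K a b * three_term_left -
      (hKc a b (G a b * G b c)).eq + (hKc a b (G b c)).eq * G a c
  have coeff_sbc : G a b * K b c * G a c = G b c * G a b * K b c + K b c * G a c * G c b := by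
    linear_combination (norm := noncomm_ring) K b c * three_term_right -
      (hKc b c (G a b)).eq * G a c + (hKc b c (G b c * G a b)).eq
  have coeff_sbc_sab : G a b * K b c * K a c = K b c * K a c * G a b :=
    (mul_assoc _ _ _).trans ((hKc b c _).mul_left (hKc a c _)).symm.eq
  have coeff_sab_sbc : K a b * K a c * G b c = G b c * K a b * K a c :=
    ((hKc a b _).mul_left (hKc a c _)).eq.trans (mul_assoc _ _ _).symm
  have coeff_longest : K a b * K a c * K b c = K b c * K a c * K a b := by
    rw [mul_assoc, (hKc a b _).eq, (hKc a c _).eq]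
  linear_combination (norm := noncomm_ring) coeff_one * x + coeff_sab * sab x +
    coeff_sbc * sbc x + coeff_sbc_sab * sbc (sab x) + coeff_sab_sbc * sab (sbc x) +
    coeff_longest * sbc (sab (sbc x))

end DemazureLusztig

section FunctionAlgebra

variable {κ A : Type*} [CommRing κ] [Ring A] [Algebra κ A]

/-- The diagonal action of a group on the algebra of functions on the group with values in an
algebra on which the group acts: `(w • f) u = w • f (w⁻¹ * u)`. -/
def diagonalAction {G : Type*} [Group G] (τ : G →* (A →ₐ[κ] A)) :
    G →* ((G → A) →ₐ[κ] (G → A)) where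
  toFun w := AlgHom.ofLinearMap
    ((τ w).toLinearMap.compLeft G ∘ₗ LinearMap.funLeft κ A (w⁻¹ * ·))
    (funext fun _ => map_one (τ w)) (fun _ _ => funext fun _ => map_mul (τ w) _ _)
  map_one' := by ext f u; simp [LinearMap.funLeft]
  map_mul' v w := by ext f u; simp [LinearMap.funLeft, mul_assoc]

theorem diagonalAction_apply {G : Type*} [Group G] (τ : G →* (A →ₐ[κ] A)) (w u : G) (f : G → A) :
    diagonalAction τ w f u = τ w (f (w⁻¹ * u)) := rfl

variable {I : Type*}

/-- The family of constant functions with values `g i j`. -/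
def constFamily (g : I → I → A) (i j : I) : Equiv.Perm I → A := Function.const _ (g i j)

/-- A splitting `K i j * K j i = Q i j` of a symmetric family `Q`: the function on permutations
with value `Q i j` at those `u` for which `i` comes before `j` in the sequence of values of `u`,
and `1` at the others. -/
def orderSplitting [LT I] [DecidableLT I] (Q : I → I → A) (i j : I) : Equiv.Perm I → A := fun u =>
  if u⁻¹ i < u⁻¹ j then Q i j else 1

theorem IsEquivariant.constFamily {τ : Equiv.Perm I →* (A →ₐ[κ] A)} {g : I → I → A}
    (hg : IsEquivariant τ g) : IsEquivariant (diagonalAction τ) (constFamily g) :=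
  fun w i j => funext fun _ => hg w i j

variable [LinearOrder I] {τ : Equiv.Perm I →* (A →ₐ[κ] A)} {Q : I → I → A}

theorem IsEquivariant.orderSplitting (hQ : IsEquivariant τ Q) :
    IsEquivariant (diagonalAction τ) (orderSplitting Q) := fun w i j => by
  ext u
  simp only [diagonalAction_apply, QuantumWreath.orderSplitting, mul_inv_rev, inv_inv,
    Equiv.Perm.mul_apply]
  split_ifs
  exacts [hQ w i j, map_one _]

theorem orderSplitting_commute (hQ : ∀ i j, i ≠ j → ∀ y, Commute (Q i j) y) (i j : I)
    (f : Equiv.Perm I → A) : Commute (orderSplitting Q i j) f := by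
  ext u
  simp only [Pi.mul_apply, orderSplitting]
  split_ifs with h
  · exact hQ i j (by rintro rfl; exact h.false) _
  · exact (Commute.one_left _).eq

theorem orderSplitting_mul_swap {i j : I} (hij : i ≠ j) (hQ : Q i j = Q j i) :
    orderSplitting Q i j * orderSplitting Q j i = constFamily Q i j := by
  ext u
  simp only [Pi.mul_apply, orderSplitting, constFamily, Function.const_apply]
  rcases lt_or_gt_of_ne (u⁻¹.injective.ne hij) with h | h
  · rw [if_pos h, if_neg h.not_gt, mul_one]
  · rw [if_pos h, if_neg h.not_gt, one_mul, hQ]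

/-- The operator on functions on the symmetric group by which the `i`-th generator acts. -/
noncomputable def simpleOperator {m : ℕ} (τ : Equiv.Perm (Fin (m + 2)) →* (A →ₐ[κ] A))
    (g Q : Fin (m + 2) → Fin (m + 2) → A) (i : Fin (m + 1)) :
    Module.End κ (Equiv.Perm (Fin (m + 2)) → A) :=
  demazureLusztig (diagonalAction τ) (constFamily g) (orderSplitting Q) i.castSucc i.succ

section LeadingTerm

variable {m} {τ : Equiv.Perm (Fin (m + 2)) →* (A →ₐ[κ] A)} {g Q : Fin (m + 2) → Fin (m + 2) → A}

theorem simpleOperator_apply (i : Fin (m + 1)) (f : Equiv.Perm (Fin (m + 2)) → A)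
    (u : Equiv.Perm (Fin (m + 2))) : simpleOperator τ g Q i f u = g i.castSucc i.succ * f u +
      orderSplitting Q i.castSucc i.succ u * τ (swPerm m i) (f (swPerm m i * u)) := by
  nth_rw 2 [← inv_swPerm i]
  rfl

theorem IsReducedLift.apply_single_one
    {H : Equiv.Perm (Fin (m + 2)) → Module.End κ (Equiv.Perm (Fin (m + 2)) → A)}
    (hH : IsReducedLift (simpleOperator τ g Q) H) (a : A) (w : Equiv.Perm (Fin (m + 2))) :
    H w (Pi.single 1 a) w = τ w a ∧
      ∀ u, u ≠ w → invCount m w ≤ invCount m u → H w (Pi.single 1 a) u = 0 := by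
  induction w using swPerm_induction with
  | one =>
    simp only [hH.one, Module.End.one_apply, Pi.single_eq_same, map_one, AlgHom.one_apply]
    exact ⟨trivial, fun u hu _ => by rw [Pi.single_eq_of_ne hu]⟩
  | swPerm_mul i w hlen ih =>
    obtain ⟨ih_self, ih_other⟩ := ih
    simp only [hH.swPerm_mul hlen, Module.End.mul_apply, simpleOperator_apply]
    constructor
    · have h_desc : ¬ (swPerm m i * w)⁻¹ i.castSucc < (swPerm m i * w)⁻¹ i.succ := fun h => by
        have := invCount_swPerm_mul_of_lt h
        rw [swPerm_mul_self_mul] at this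
        omega
      have h_ne : swPerm m i * w ≠ w := fun h => by
        rw [h] at hlen
        omega
      rw [ih_other _ h_ne (by omega), mul_zero, zero_add, swPerm_mul_self_mul, ih_self,
        orderSplitting, if_neg h_desc, one_mul, ← AlgHom.mul_apply, ← map_mul]
    · intro u hu hle
      have h_len := invCount_swPerm_mul_or i u
      have h_u : H w (Pi.single 1 a) u = 0 :=
        ih_other u (by rintro rfl; omega) (by omega)
      have h_swap : H w (Pi.single 1 a) (swPerm m i * u) = 0 :=
        ih_other _ (fun h => hu (by rw [← h, swPerm_mul_self_mul])) (by omega)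
      rw [h_u, h_swap, map_zero, mul_zero, mul_zero, add_zero]

end LeadingTerm

end FunctionAlgebra

section Model

/-- The relations between `g` and `Q` under which the Demazure–Lusztig operators with coefficients
`g` and `K`, for any splitting `K i j * K j i = Q i j` of `Q`, satisfy the braid relations. -/
structure IsBraidDatum {κ A I : Type*} [CommRing κ] [Ring A] [Algebra κ A]
    (τ : Equiv.Perm I →* (A →ₐ[κ] A)) (g Q : I → I → A) : Prop where
  equivariant_g : IsEquivariant τ g
  equivariant_Q : IsEquivariant τ Q
  symm_Q : ∀ i j, i ≠ j → Q i j = Q j i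
  central_Q : ∀ i j, i ≠ j → ∀ y, Commute (Q i j) y
  three_term_left : ∀ a b c, a ≠ b → b ≠ c → a ≠ c →
    g a c * g b a + g a b * g b c = g b c * g a c
  three_term_right : ∀ a b c, a ≠ b → b ≠ c → a ≠ c →
    g a b * g a c = g a c * g c b + g b c * g a b
  braid : ∀ a b c, a ≠ b → b ≠ c → a ≠ c →
    g a b * g b c * g a b + g a c * Q a b = g b c * g a b * g b c + g a c * Q b c
  far : ∀ a b c d, a ≠ b → c ≠ d → a ≠ c → a ≠ d → b ≠ c → b ≠ d → Commute (g a b) (g c d)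

variable [Field k] [Ring F] [Algebra k F]
variable (Δf : Fin 2 → Fin 2 → F ⊗[k] F) (Rv : F ⊗[k] F)
variable (ρf : Fin (m + 1) → BD k F m →ₗ[k] BD k F m)

/-- An algebra containing `B^{⊗d}` in which `ρ_i` is the twisted commutator with an element
`g i (i + 1)`, these elements satisfying the identities needed for `B ≀ H(d)` to act on functions
on the symmetric group through Demazure–Lusztig operators. -/
structure PBWModel (A : Type*) [Ring A] [Algebra k A] where
  φ : BD k F m →ₐ[k] A
  τ : Equiv.Perm (Fin (m + 2)) →* (A →ₐ[k] A)
  g : Fin (m + 2) → Fin (m + 2) → A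
  Q : Fin (m + 2) → Fin (m + 2) → A
  φ_injective : Function.Injective φ
  φ_sigmaB : ∀ i b, φ (sigmaB k F m i b) = τ (swPerm m i) (φ b)
  isBraidDatum : IsBraidDatum τ g Q
  φ_SI : ∀ i, φ (SI k F m Δf i) = g i.castSucc i.succ + g i.succ i.castSucc
  Q_eq : ∀ i : Fin (m + 1), Q i.castSucc i.succ =
    φ (RI k F m Rv i) + g i.succ i.castSucc * g i.castSucc i.succ
  g_mul_φ : ∀ (i : Fin (m + 1)) b, g i.castSucc i.succ * φ b =
    φ (sigmaB k F m i b) * g i.castSucc i.succ + φ (ρf i b)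

namespace PBWModel

variable {k F m Δf Rv ρf} {A : Type*} [Ring A] [Algebra k A] (M : PBWModel k F m Δf Rv ρf A)

/-- The action of `B^{⊗d}` on functions on the symmetric group by multiplication. -/
noncomputable def baseAction :
    BD k F m →ₐ[k] Module.End k (Equiv.Perm (Fin (m + 2)) → A) :=
  ((Algebra.lmul k _).comp (Pi.constAlgHom k _ A)).comp M.φ

theorem baseAction_eq_mulLeft (b : BD k F m) :
    M.baseAction b = LinearMap.mulLeft k (Function.const _ (M.φ b)) := rfl

/-- The operator by which the generator `H_i` acts on functions on the symmetric group. -/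
noncomputable def genAction (i : Fin (m + 1)) :
    Module.End k (Equiv.Perm (Fin (m + 2)) → A) :=
  simpleOperator M.τ M.g M.Q i

theorem genAction_commute {i j : Fin (m + 1)} (h : (i : ℕ) + 2 ≤ j ∨ (j : ℕ) + 2 ≤ i) :
    Commute (M.genAction i) (M.genAction j) := by
  have h₁ : i.castSucc ≠ j.castSucc := by simp only [ne_eq, Fin.ext_iff, Fin.val_castSucc]; omega
  have h₂ : i.castSucc ≠ j.succ := by
    simp only [ne_eq, Fin.ext_iff, Fin.val_castSucc, Fin.val_succ]; omega
  have h₃ : i.succ ≠ j.castSucc := by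
    simp only [ne_eq, Fin.ext_iff, Fin.val_castSucc, Fin.val_succ]; omega
  have h₄ : i.succ ≠ j.succ := by simp only [ne_eq, Fin.ext_iff, Fin.val_succ]; omega
  exact demazureLusztig_commute M.isBraidDatum.equivariant_g.constFamily
    M.isBraidDatum.equivariant_Q.orderSplitting
    (orderSplitting_commute M.isBraidDatum.central_Q) h₁ h₂ h₃ h₄
    (funext fun _ => M.isBraidDatum.far _ _ _ _ Fin.castSucc_lt_succ.ne Fin.castSucc_lt_succ.ne
      h₁ h₂ h₃ h₄)

theorem genAction_braid {i j : Fin (m + 1)} (h : (i : ℕ) + 1 = j) :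
    M.genAction i * M.genAction j * M.genAction i =
      M.genAction j * M.genAction i * M.genAction j := by
  have hij : j.castSucc = i.succ := by simp [Fin.ext_iff, h]
  have hab : i.castSucc ≠ i.succ := Fin.castSucc_lt_succ.ne
  have hbc : i.succ ≠ j.succ := hij ▸ Fin.castSucc_lt_succ.ne
  have hac : i.castSucc ≠ j.succ := by
    simp only [ne_eq, Fin.ext_iff, Fin.val_castSucc, Fin.val_succ]; omega
  have hM := M.isBraidDatum
  rw [genAction, genAction, simpleOperator, simpleOperator, hij]
  refine demazureLusztig_braid hM.equivariant_g.constFamily hM.equivariant_Q.orderSplitting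
    (orderSplitting_commute hM.central_Q) hab hbc hac
    (funext fun _ => hM.three_term_left _ _ _ hab hbc hac)
    (funext fun _ => hM.three_term_right _ _ _ hab hbc hac) ?_
  rw [orderSplitting_mul_swap hab (hM.symm_Q _ _ hab),
    orderSplitting_mul_swap hbc (hM.symm_Q _ _ hbc)]
  exact funext fun _ => hM.braid _ _ _ hab hbc hac

theorem genAction_mul_genAction (i : Fin (m + 1)) :
    M.genAction i * M.genAction i =
      M.baseAction (SI k F m Δf i) * M.genAction i + M.baseAction (RI k F m Rv i) := by
  have hM := M.isBraidDatum
  have hi : i.castSucc ≠ i.succ := Fin.castSucc_lt_succ.ne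
  rw [baseAction_eq_mulLeft, baseAction_eq_mulLeft, M.φ_SI]
  refine demazureLusztig_mul_self hM.equivariant_g.constFamily hM.equivariant_Q.orderSplitting
    (orderSplitting_commute hM.central_Q) ?_
  rw [orderSplitting_mul_swap hi (hM.symm_Q _ _ hi)]
  exact funext fun _ => M.Q_eq i

theorem genAction_mul_baseAction (i : Fin (m + 1)) (b : BD k F m) :
    M.genAction i * M.baseAction b =
      M.baseAction (sigmaB k F m i b) * M.genAction i + M.baseAction (ρf i b) := by
  have hσ : Function.const _ (M.φ (sigmaB k F m i b)) =
      diagonalAction M.τ (Equiv.swap i.castSucc i.succ) (Function.const _ (M.φ b)) :=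
    funext fun _ => M.φ_sigmaB i b
  simp only [baseAction_eq_mulLeft]
  rw [hσ]
  refine demazureLusztig_mul_mulLeft (orderSplitting_commute M.isBraidDatum.central_Q) ?_
  rw [← hσ]
  exact funext fun _ => M.g_mul_φ i b

theorem lift_eq_of_qRel {x y : FreeAlgebra k (BD k F m ⊕ Fin (m + 1))}
    (h : QRel k F m Δf Rv ρf x y) :
    FreeAlgebra.lift k (Sum.elim M.baseAction M.genAction) x =
      FreeAlgebra.lift k (Sum.elim M.baseAction M.genAction) y := by
  cases h <;> simp only [map_add, map_mul, map_one, map_smul, FreeAlgebra.lift_ι_apply,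
    Sum.elim_inl, Sum.elim_inr]
  case braid_far i j h => exact M.genAction_commute h
  case braid i j h => exact M.genAction_braid h
  case quad i => exact M.genAction_mul_genAction i
  case wreath i b => exact M.genAction_mul_baseAction i b

/-- The representation of `B ≀ H(d)` on functions on the symmetric group. -/
noncomputable def rep :
    QWP k F m Δf Rv ρf →ₐ[k] Module.End k (Equiv.Perm (Fin (m + 2)) → A) :=
  RingQuot.liftAlgHom k
    ⟨FreeAlgebra.lift k (Sum.elim M.baseAction M.genAction), fun _ _ => M.lift_eq_of_qRel⟩

theorem rep_embHom (b : BD k F m) : M.rep (embHom k F m Δf Rv ρf b) = M.baseAction b :=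
  (RingQuot.liftAlgHom_mkAlgHom_apply k _ _ _).trans (FreeAlgebra.lift_ι_apply _ _)

theorem rep_genH (i : Fin (m + 1)) : M.rep (genH k F m Δf Rv ρf i) = M.genAction i :=
  (RingQuot.liftAlgHom_mkAlgHom_apply k _ _ _).trans (FreeAlgebra.lift_ι_apply _ _)

variable {H : Equiv.Perm (Fin (m + 2)) → QWP k F m Δf Rv ρf}

theorem rep_apply_single_one (hH : IsReducedLift (genH k F m Δf Rv ρf) H) (a : A)
    (w : Equiv.Perm (Fin (m + 2))) :
    M.rep (H w) (Pi.single 1 a) w = M.τ w a ∧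
      ∀ u, u ≠ w → invCount m w ≤ invCount m u → M.rep (H w) (Pi.single 1 a) u = 0 := by
  have hrep : IsReducedLift M.genAction (M.rep ∘ H) := by
    have h := hH.map M.rep.toRingHom.toMonoidHom
    rwa [show M.rep.toRingHom.toMonoidHom ∘ genH k F m Δf Rv ρf = M.genAction from
      funext M.rep_genH] at h
  exact hrep.apply_single_one a w

theorem pbwLeft_injective (M : PBWModel k F m Δf Rv ρf A)
    (hH : IsReducedLift (genH k F m Δf Rv ρf) H) : Function.Injective (pbwLeft H) := by
  let E := LinearMap.applyₗ (Pi.single 1 1) ∘ₗ M.rep.toLinearMap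
  have hE : ∀ w b u, E (embHom k F m Δf Rv ρf b * H w) u =
      M.φ b * M.rep (H w) (Pi.single 1 1) u := fun w b u => by
    simp [E, rep_embHom, baseAction_eq_mulLeft]
  refine lsum_injective_of_triangular E (invCount m) (fun w b h => ?_) fun w u b hu hle => ?_
  · refine (map_eq_zero_iff M.φ M.φ_injective).1 ?_
    rw [← h, ← mul_one (M.φ b), ← map_one (M.τ w), ← (M.rep_apply_single_one hH 1 w).1]
    exact (hE w b w).symm
  · exact (hE w b u).trans (by rw [(M.rep_apply_single_one hH 1 w).2 u hu hle, mul_zero])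

theorem pbwRight_injective (M : PBWModel k F m Δf Rv ρf A)
    (hH : IsReducedLift (genH k F m Δf Rv ρf) H) : Function.Injective (pbwRight H) := by
  let E := LinearMap.applyₗ (Pi.single 1 1) ∘ₗ M.rep.toLinearMap
  have hE : ∀ w b, E (H w * embHom k F m Δf Rv ρf b) = M.rep (H w) (Pi.single 1 (M.φ b)) :=
      fun w b => by
    have h : Function.const _ (M.φ b) * Pi.single 1 1 =
        (Pi.single 1 (M.φ b) : Equiv.Perm (Fin (m + 2)) → A) := by
      rw [← Pi.single_mul_right, Function.const_apply, mul_one]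
    simp [E, rep_embHom, baseAction_eq_mulLeft, h]
  refine lsum_injective_of_triangular E (invCount m) (fun w b h => ?_) fun w u b hu hle => ?_
  · have h_diag : M.τ w (M.φ b) = 0 :=
      (M.rep_apply_single_one hH _ w).1.symm.trans ((congrFun (hE w b) w).symm.trans h)
    rw [← map_eq_zero_iff M.φ M.φ_injective, ← map_inv_map M.τ w (M.φ b), h_diag, map_zero]
  · exact (congrFun (hE w b) u).trans ((M.rep_apply_single_one hH _ w).2 u hu hle)

end PBWModel

end Model

section FrobeniusFamily

variable {K A I : Type*} [CommRing K] [Ring A] [Algebra K A] [DecidableEq I]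

/-- A family with one element `P i j` for each pair of tensor slots, which moves past any `y` at
the cost of exchanging the slots `i` and `j` of `y`; `θ` is the action of permutations on slots. -/
structure IsFrobeniusFamily (θ : Equiv.Perm I →* (A →ₐ[K] A)) (P : I → I → A) : Prop where
  equivariant : IsEquivariant θ P
  symm : ∀ {i j}, i ≠ j → P i j = P j i
  mul_eq : ∀ {i j}, i ≠ j → ∀ y, P i j * y = θ (Equiv.swap i j) y * P i j

namespace IsFrobeniusFamily

variable {θ : Equiv.Perm I →* (A →ₐ[K] A)} {P Q T : I → I → A}

theorem add (hP : IsFrobeniusFamily θ P) (hQ : IsFrobeniusFamily θ Q) :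
    IsFrobeniusFamily θ (P + Q) where
  equivariant w i j := by simp only [Pi.add_apply, map_add, hP.equivariant w, hQ.equivariant w]
  symm h := by simp only [Pi.add_apply, hP.symm h, hQ.symm h]
  mul_eq h y := by simp only [Pi.add_apply, add_mul, mul_add, hP.mul_eq h, hQ.mul_eq h]

theorem smul (c : K) (hP : IsFrobeniusFamily θ P) : IsFrobeniusFamily θ (c • P) where
  equivariant w i j := by simp only [Pi.smul_apply, map_smul, hP.equivariant w]
  symm h := by simp only [Pi.smul_apply, hP.symm h]
  mul_eq h y := by simp only [Pi.smul_apply, smul_mul_assoc, mul_smul_comm, hP.mul_eq h]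

theorem mul_eq_mul_swap (hP : IsFrobeniusFamily θ P) (hQ : IsEquivariant θ Q) {i j : I}
    (hij : i ≠ j) (a b : I) :
    P i j * Q a b = Q (Equiv.swap i j a) (Equiv.swap i j b) * P i j := by
  rw [hP.mul_eq hij, hQ]

theorem commute (hP : IsFrobeniusFamily θ P) (hQ : IsFrobeniusFamily θ Q) {i j : I} (hij : i ≠ j) :
    Commute (P i j) (Q i j) := by
  rw [Commute, SemiconjBy, hP.mul_eq_mul_swap hQ.equivariant hij, Equiv.swap_apply_left,
    Equiv.swap_apply_right, hQ.symm hij]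

theorem mul_commute (hP : IsFrobeniusFamily θ P) (hQ : IsFrobeniusFamily θ Q) {i j : I}
    (hij : i ≠ j) (y : A) : Commute (P i j * Q i j) y := by
  rw [Commute, SemiconjBy, mul_assoc, hQ.mul_eq hij, ← mul_assoc, hP.mul_eq hij,
    map_swap_map_swap, mul_assoc]

theorem commute_of_disjoint (hP : IsFrobeniusFamily θ P) (hQ : IsEquivariant θ Q)
    {a b c d : I} (hab : a ≠ b) (hac : a ≠ c) (had : a ≠ d) (hbc : b ≠ c) (hbd : b ≠ d) :
    Commute (P a b) (Q c d) := by
  rw [Commute, SemiconjBy, hP.mul_eq_mul_swap hQ hab,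
    Equiv.swap_apply_of_ne_of_ne hac.symm hbc.symm, Equiv.swap_apply_of_ne_of_ne had.symm hbd.symm]

variable {a b c : I}

theorem mul_eq_mul_left (hP : IsFrobeniusFamily θ P) (hQ : IsEquivariant θ Q) (hab : a ≠ b)
    (hbc : b ≠ c) (hac : a ≠ c) : P a b * Q b c = Q a c * P a b := by
  rw [hP.mul_eq_mul_swap hQ hab, Equiv.swap_apply_right,
    Equiv.swap_apply_of_ne_of_ne hac.symm hbc.symm]

theorem mul_eq_mul_right (hP : IsFrobeniusFamily θ P) (hQ : IsEquivariant θ Q) (hab : a ≠ b)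
    (hbc : b ≠ c) (hac : a ≠ c) : Q a b * P b c = P b c * Q a c := by
  rw [hP.mul_eq_mul_swap hQ hbc, Equiv.swap_apply_right, Equiv.swap_apply_of_ne_of_ne hab hac]

theorem mul_eq_swap_mul (hP : IsFrobeniusFamily θ P) (hQ : IsFrobeniusFamily θ Q) (hab : a ≠ b)
    (hbc : b ≠ c) (hac : a ≠ c) : P a b * Q b c = Q a b * P b c := by
  rw [hP.mul_eq_mul_left hQ.equivariant hab hbc hac, hQ.symm hac,
    hQ.mul_eq_mul_left hP.equivariant hac.symm hab hbc.symm, hQ.symm hac.symm, hP.symm hbc.symm,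
    hP.mul_eq_mul_right hQ.equivariant hab hbc hac]

theorem yangBaxter (hP : IsFrobeniusFamily θ P) (hQ : IsFrobeniusFamily θ Q)
    (hT : IsFrobeniusFamily θ T) (hab : a ≠ b) (hbc : b ≠ c) (hac : a ≠ c) :
    P a b * Q a c * T b c = T b c * Q a c * P a b := by
  rw [mul_assoc, hP.mul_eq hab, map_mul, hQ.equivariant, hT.equivariant, Equiv.swap_apply_left,
    Equiv.swap_apply_right, Equiv.swap_apply_of_ne_of_ne hac.symm hbc.symm,
    ← hQ.mul_eq_mul_right hT.equivariant hab hbc hac, hT.mul_eq_swap_mul hQ hab hbc hac,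
    hT.mul_eq_mul_right hQ.equivariant hab hbc hac]

end IsFrobeniusFamily

/-- The family `β(s, t) = P⁰⁰ + s P¹⁰ + t P⁰¹ + s t P¹¹`. -/
def betaFamily (P : Fin 2 → Fin 2 → I → I → A) (s t : K) : I → I → A :=
  P 0 0 + s • P 1 0 + t • P 0 1 + (s * t) • P 1 1

/-- The hypotheses on the elements `Δ^{pq}`, in terms of their placements `P p q i j` in the
tensor slots `i` and `j`. -/
structure IsFrobeniusDatum (θ : Equiv.Perm I →* (A →ₐ[K] A)) (P : Fin 2 → Fin 2 → I → I → A) :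
    Prop where
  frobenius : ∀ p q, IsFrobeniusFamily θ (P p q)
  mul_eq : ∀ {a b c}, a ≠ b → b ≠ c → a ≠ c → P 0 0 a b * P 1 1 b c = P 0 1 a b * P 1 0 b c

namespace IsFrobeniusDatum

variable {θ : Equiv.Perm I →* (A →ₐ[K] A)} {P : Fin 2 → Fin 2 → I → I → A}

theorem frobenius_betaFamily (hP : IsFrobeniusDatum θ P) (s t : K) :
    IsFrobeniusFamily θ (betaFamily P s t) :=
  (((hP.frobenius 0 0).add ((hP.frobenius 1 0).smul s)).add
    ((hP.frobenius 0 1).smul t)).add ((hP.frobenius 1 1).smul (s * t))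

theorem transpose (hP : IsFrobeniusDatum θ P) : IsFrobeniusDatum θ fun p q => P q p where
  frobenius p q := hP.frobenius q p
  mul_eq hab hbc hac := (hP.mul_eq hab hbc hac).trans
    ((hP.frobenius 0 1).mul_eq_swap_mul (hP.frobenius 1 0) hab hbc hac)

theorem betaFamily_three_term (hP : IsFrobeniusDatum θ P) {a b c : I} (hab : a ≠ b) (hbc : b ≠ c)
    (hac : a ≠ c) (r s t : K) :
    (r - t) • (betaFamily P r s a b * betaFamily P s t b c) =
      (s - t) • (betaFamily P r t a b * betaFamily P s r b c) +
        (r - s) • (betaFamily P r t a b * betaFamily P s t b c) := by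
  have swap_mul : ∀ p q p' q', P p q a b * P p' q' b c = P p' q' a b * P p q b c :=
    fun p q p' q' =>
      (hP.frobenius p q).mul_eq_swap_mul (hP.frobenius p' q') hab hbc hac
  simp only [betaFamily, Pi.add_apply, Pi.smul_apply, smul_mul_assoc, mul_smul_comm,
    mul_add, add_mul]
  rw [swap_mul 1 0 0 0, swap_mul 0 1 0 0, swap_mul 1 1 0 0, swap_mul 1 0 0 1, swap_mul 1 1 0 1,
    swap_mul 1 1 1 0, hP.mul_eq hab hbc hac]
  module

end IsFrobeniusDatum

end FrobeniusFamily

section DividedBeta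

variable {K A I : Type*} [Field K] [Ring A] [Algebra K A]

/-- The family `β_ij / (x_i - x_j)`. -/
noncomputable def dividedBeta (P : Fin 2 → Fin 2 → I → I → A) (x : I → K) (i j : I) : A :=
  (x i - x j)⁻¹ • betaFamily P (x i) (x j) i j

variable {P : Fin 2 → Fin 2 → I → I → A} {x : I → K}

theorem sub_smul_dividedBeta (hx : Function.Injective x) {i j : I} (hij : i ≠ j) :
    (x i - x j) • dividedBeta P x i j = betaFamily P (x i) (x j) i j :=
  smul_inv_smul₀ (sub_ne_zero.2 (hx.ne hij)) _

theorem dividedBeta_mul_eq (hx : Function.Injective x) {i j : I} (hij : i ≠ j) {y z r : A}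
    (hr : (x i - x j) • r =
      betaFamily P (x i) (x j) i j * y - z * betaFamily P (x i) (x j) i j) :
    dividedBeta P x i j * y = z * dividedBeta P x i j + r := by
  rw [dividedBeta, smul_mul_assoc, mul_smul_comm, ← sub_eq_iff_eq_add', ← smul_sub, ← hr,
    inv_smul_smul₀ (sub_ne_zero.2 (hx.ne hij))]

theorem dividedBeta_transpose (i j : I) :
    dividedBeta (fun p q => P q p) x i j = -((x j - x i)⁻¹ • betaFamily P (x j) (x i) i j) := by
  simp only [dividedBeta, betaFamily, ← neg_smul, ← inv_neg, neg_sub, mul_comm (x j)]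
  simp only [Pi.add_apply, Pi.smul_apply]
  module

theorem IsEquivariant.dividedBeta {k : Type*} [CommRing k] [Algebra k A]
    {τ : Equiv.Perm I →* (A →ₐ[k] A)} {κ : Equiv.Perm I → K →+* K}
    (smul : ∀ w c y, τ w (c • y) = κ w c • τ w y) (apply_x : ∀ w i, κ w (x i) = x (w i))
    (hP : ∀ p q, IsEquivariant τ (P p q)) :
    IsEquivariant τ (QuantumWreath.dividedBeta P x) := fun w i j => by
  simp only [QuantumWreath.dividedBeta, betaFamily, Pi.add_apply, Pi.smul_apply, smul, map_inv₀,
    map_sub, map_add, map_mul, apply_x, hP _ _ w]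

namespace IsFrobeniusDatum

variable [DecidableEq I] {θ : Equiv.Perm I →* (A →ₐ[K] A)}

theorem dividedBeta_symm (hP : IsFrobeniusDatum θ P) {i j : I} (hij : i ≠ j) :
    dividedBeta P x j i = (x j - x i)⁻¹ • betaFamily P (x j) (x i) i j := by
  rw [dividedBeta, (hP.frobenius_betaFamily _ _).symm hij]

theorem dividedBeta_add_dividedBeta (hP : IsFrobeniusDatum θ P) (hx : Function.Injective x)
    {i j : I} (hij : i ≠ j) :
    dividedBeta P x i j + dividedBeta P x j i = P 1 0 i j - P 0 1 i j := by
  have h_ne := sub_ne_zero.2 (hx.ne hij)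
  refine smul_right_injective A h_ne ?_
  simp only [smul_add, sub_smul_dividedBeta hx hij]
  rw [← neg_sub (x j), neg_smul, sub_smul_dividedBeta hx hij.symm,
    (hP.frobenius_betaFamily _ _).symm hij.symm]
  simp only [betaFamily, Pi.add_apply, Pi.smul_apply]
  module

theorem dividedBeta_commute (hP : IsFrobeniusDatum θ P) {i j : I} (hij : i ≠ j) :
    Commute (dividedBeta P x i j) (dividedBeta P x j i) := by
  rw [hP.dividedBeta_symm hij, dividedBeta]
  exact (((hP.frobenius_betaFamily _ _).commute (hP.frobenius_betaFamily _ _)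
    hij).smul_left _).smul_right _

theorem dividedBeta_mul_commute (hP : IsFrobeniusDatum θ P) {i j : I} (hij : i ≠ j) (y : A) :
    Commute (dividedBeta P x j i * dividedBeta P x i j) y := by
  rw [hP.dividedBeta_symm hij, dividedBeta, smul_mul_smul_comm]
  exact ((hP.frobenius_betaFamily _ _).mul_commute (hP.frobenius_betaFamily _ _)
    hij y).smul_left _

theorem dividedBeta_commute_of_disjoint (hP : IsFrobeniusDatum θ P) {a b c d : I} (hab : a ≠ b)
    (hac : a ≠ c) (had : a ≠ d) (hbc : b ≠ c) (hbd : b ≠ d) :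
    Commute (dividedBeta P x a b) (dividedBeta P x c d) :=
  (((hP.frobenius_betaFamily _ _).commute_of_disjoint
    (hP.frobenius_betaFamily _ _).equivariant hab hac had hbc hbd).smul_left _).smul_right _

variable {a b c : I}

theorem dividedBeta_three_term_left (hP : IsFrobeniusDatum θ P) (hx : Function.Injective x)
    (hab : a ≠ b) (hbc : b ≠ c) (hac : a ≠ c) :
    dividedBeta P x a c * dividedBeta P x b a + dividedBeta P x a b * dividedBeta P x b c =
      dividedBeta P x b c * dividedBeta P x a c := by
  have hβ := hP.frobenius_betaFamily
  have h_ab := sub_ne_zero.2 (hx.ne hab)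
  have h_bc := sub_ne_zero.2 (hx.ne hbc)
  have h_ac := sub_ne_zero.2 (hx.ne hac)
  have h_ba : (x b - x a)⁻¹ = -(x a - x b)⁻¹ := by rw [← inv_neg, neg_sub]
  have move_left : ∀ r s t u, betaFamily P r s a c * betaFamily P t u b a =
      betaFamily P r s a b * betaFamily P t u b c := fun r s t u => by
    rw [(hβ r s).symm hac, (hβ t u).symm hab.symm,
      (hβ r s).mul_eq_mul_left (hβ t u).equivariant hac.symm hab hbc.symm,
      (hβ t u).symm hbc.symm, (hβ r s).symm hac.symm]
    exact ((hβ t u).mul_eq_mul_right (hβ r s).equivariant hab hbc hac).symm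
  have three_term := hP.betaFamily_three_term hab hbc hac (x a) (x b) (x c)
  simp only [dividedBeta, smul_mul_smul_comm, move_left,
    ← (hβ _ _).mul_eq_mul_right (hβ _ _).equivariant hab hbc hac, h_ba]
  refine smul_right_injective A (mul_ne_zero (mul_ne_zero h_ab h_bc) h_ac) ?_
  linear_combination (norm := skip) three_term
  match_scalars <;> field_simp <;> ring

theorem dividedBeta_three_term_right (hP : IsFrobeniusDatum θ P) (hx : Function.Injective x)
    (hab : a ≠ b) (hbc : b ≠ c) (hac : a ≠ c) :
    dividedBeta P x a b * dividedBeta P x a c =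
      dividedBeta P x a c * dividedBeta P x c b + dividedBeta P x b c * dividedBeta P x a b := by
  have h_neg : ∀ {i j}, i ≠ j →
      dividedBeta (fun p q => P q p) x i j = -dividedBeta P x j i := fun h => by
    rw [dividedBeta_transpose, hP.dividedBeta_symm h]
  have h := hP.transpose.dividedBeta_three_term_left hx hbc.symm hab.symm hac.symm
  simpa only [h_neg hac.symm, h_neg hbc, h_neg hbc.symm, h_neg hab.symm, neg_mul_neg] using h.symm

theorem dividedBeta_yangBaxter (hP : IsFrobeniusDatum θ P)
    (hab : a ≠ b) (hbc : b ≠ c) (hac : a ≠ c) :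
    dividedBeta P x a b * dividedBeta P x a c * dividedBeta P x b c =
      dividedBeta P x b c * dividedBeta P x a c * dividedBeta P x a b := by
  simp only [dividedBeta, smul_mul_smul_comm, (hP.frobenius_betaFamily _ _).yangBaxter
    (hP.frobenius_betaFamily _ _) (hP.frobenius_betaFamily _ _) hab hbc hac]
  congr 1
  ring

theorem isBraidDatum_dividedBeta (hP : IsFrobeniusDatum θ P) (hx : Function.Injective x)
    {k : Type*} [CommRing k] [Algebra k A] {τ : Equiv.Perm I →* (A →ₐ[k] A)} {R : I → I → A}
    (equivariant : IsEquivariant τ (dividedBeta P x)) (hRτ : IsEquivariant τ R)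
    (hRθ : IsEquivariant θ R) (R_symm : ∀ i j, i ≠ j → R i j = R j i)
    (R_central : ∀ i j, i ≠ j → ∀ y, Commute (R i j) y) :
    IsBraidDatum τ (dividedBeta P x)
      (fun i j => R i j + dividedBeta P x j i * dividedBeta P x i j) where
  equivariant_g := equivariant
  equivariant_Q w i j := by
    simp only [map_add, map_mul, hRτ w, equivariant w]
  symm_Q i j hij := by rw [R_symm i j hij, (hP.dividedBeta_commute hij).eq]
  central_Q i j hij y := (R_central i j hij y).add_left (hP.dividedBeta_mul_commute hij y)
  three_term_left _ _ _ := hP.dividedBeta_three_term_left hx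
  three_term_right _ _ _ := hP.dividedBeta_three_term_right hx
  braid a b c hab hbc hac := by
    have R_slide : dividedBeta P x a c * R a b = dividedBeta P x a c * R b c := by
      rw [dividedBeta, smul_mul_assoc, smul_mul_assoc,
        (hP.frobenius_betaFamily _ _).mul_eq_mul_swap hRθ hac, Equiv.swap_apply_left,
        Equiv.swap_apply_of_ne_of_ne hab.symm hbc, R_symm c b hbc.symm, (R_central b c hbc _).eq]
    linear_combination (norm := noncomm_ring)
      hP.dividedBeta_three_term_left hx hab hbc hac * dividedBeta P x a b +
      hP.dividedBeta_three_term_right hx hab hbc hac * dividedBeta P x b c -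
      hP.dividedBeta_yangBaxter hab hbc hac + R_slide
  far _ _ _ _ hab _ := hP.dividedBeta_commute_of_disjoint hab

end IsFrobeniusDatum

end DividedBeta

section TensorPower

theorem adjoin_iUnion_range_singleAlgHom {R ι : Type*} {A : ι → Type*} [Finite ι] [DecidableEq ι]
    [CommSemiring R] [∀ i, Semiring (A i)] [∀ i, Algebra R (A i)] :
    Algebra.adjoin R (⋃ i, Set.range (singleAlgHom (R := R) (A := A) i)) = ⊤ := by
  refine eq_top_iff.2 fun y _ => ?_
  induction y using PiTensorProduct.induction_on with
  | smul_tprod r f =>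
    let S := Algebra.adjoin R (⋃ i, Set.range (singleAlgHom (R := R) (A := A) i))
    refine S.smul_mem ?_ r
    exact Submonoid.pi_mem_of_mulSingle_mem (H := S.toSubmonoid.comap (tprodMonoidHom R)) f
      fun i => Algebra.subset_adjoin (Set.mem_iUnion.2 ⟨i, f i, rfl⟩)
  | add x y hx hy => exact add_mem (hx trivial) (hy trivial)

theorem mul_eq_map_mul_of_adjoin_eq_top {R A : Type*} [CommSemiring R] [Semiring A] [Algebra R A]
    {s : Set A} (hs : Algebra.adjoin R s = ⊤) {p : A} {f : A →ₐ[R] A}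
    (h : ∀ x ∈ s, p * x = f x * p) (y : A) : p * y = f y * p := by
  have hy : y ∈ Algebra.adjoin R s := hs ▸ Algebra.mem_top
  induction hy using Algebra.adjoin_induction with
  | mem x hx => exact h x hx
  | algebraMap r => rw [AlgHom.commutes, Algebra.commutes]
  | add x y _ _ hx hy => rw [map_add, mul_add, add_mul, hx, hy]
  | mul x y _ _ hx hy => rw [map_mul, ← mul_assoc, hx, mul_assoc, hy, mul_assoc]

section SlotPerm

variable {R A ι : Type*} [CommSemiring R] [Semiring A] [Algebra R A]

/-- The automorphism of a tensor power of an algebra which permutes the slots by `w`. -/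
noncomputable def slotPermHom (w : Equiv.Perm ι) :
    (⨂[R] _ : ι, A) →ₐ[R] ⨂[R] _ : ι, A :=
  liftAlgHom ((PiTensorProduct.tprod R).domDomCongr w.symm)
    (by rw [MultilinearMap.domDomCongr_apply, PiTensorProduct.one_def]; rfl)
    (fun _ _ => by simp only [MultilinearMap.domDomCongr_apply, tprod_mul_tprod]; rfl)

theorem slotPermHom_tprod (w : Equiv.Perm ι) (f : ι → A) :
    slotPermHom w (PiTensorProduct.tprod R f) = PiTensorProduct.tprod R fun i => f (w.symm i) := by
  rw [slotPermHom, liftAlgHom_apply, lift.tprod, MultilinearMap.domDomCongr_apply]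

variable (R A ι)

/-- The action of permutations on the slots of a tensor power of an algebra. -/
noncomputable def slotPerm : Equiv.Perm ι →* ((⨂[R] _ : ι, A) →ₐ[R] ⨂[R] _ : ι, A) where
  toFun := slotPermHom
  map_one' := AlgHom.toLinearMap_injective <| PiTensorProduct.ext <| MultilinearMap.ext
    fun f => slotPermHom_tprod 1 f
  map_mul' v w := AlgHom.toLinearMap_injective <| PiTensorProduct.ext <| MultilinearMap.ext
    fun f => by
      simp only [LinearMap.compMultilinearMap_apply, AlgHom.toLinearMap_apply, AlgHom.mul_apply,
        slotPermHom_tprod]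
      rfl

end SlotPerm

variable {k F m} [Field k] [Ring F] [Algebra k F]

theorem slotPerm_swPerm (i : Fin (m + 1)) (t : TPow k F m) :
    slotPerm k F _ (swPerm m i) t = sigmaT k F m i t := by
  refine LinearMap.congr_fun (f := (slotPermHom (swPerm m i)).toLinearMap) ?_ t
  exact PiTensorProduct.ext <| MultilinearMap.ext fun f =>
    (slotPermHom_tprod (swPerm m i) f).trans
      (reindex_tprod (R := k) (s := fun _ => F) (swPerm m i) f).symm

theorem slotPerm_ins (w : Equiv.Perm (Fin (m + 2))) (i : Fin (m + 2)) (a : F) :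
    slotPerm k F _ w (ins k F m i a) = ins k F m (w i) a := by
  refine (slotPermHom_tprod w _).trans (congrArg (PiTensorProduct.tprod k) ?_)
  ext j
  simp [Function.update_apply, Equiv.symm_apply_eq]

theorem ins_one (i : Fin (m + 2)) : ins k F m i 1 = 1 :=
  map_one (singleAlgHom (R := k) (A := fun _ => F) i)

theorem ins_mul (i : Fin (m + 2)) (a b : F) :
    ins k F m i (a * b) = ins k F m i a * ins k F m i b :=
  map_mul (singleAlgHom (R := k) (A := fun _ => F) i) a b

theorem ins_commute {i j : Fin (m + 2)} (hij : i ≠ j) (a b : F) :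
    Commute (ins k F m i a) (ins k F m j b) :=
  Commute.tprod (Pi.mulSingle_commute (f := fun _ => F) hij a b)

theorem place_tmul (i j : Fin (m + 2)) (a b : F) :
    place k F m i j (a ⊗ₜ b) = ins k F m i a * ins k F m j b := rfl

/-- The homomorphism `F ⊗ F → F^{⊗d}` onto the slots `i ≠ j`; as a map it is `place i j`. -/
noncomputable def placeHom {i j : Fin (m + 2)} (hij : i ≠ j) : F ⊗[k] F →ₐ[k] TPow k F m :=
  Algebra.TensorProduct.lift (singleAlgHom (A := fun _ => F) i) (singleAlgHom (A := fun _ => F) j)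
    (ins_commute hij)

theorem placeHom_apply {i j : Fin (m + 2)} (hij : i ≠ j) (Y : F ⊗[k] F) :
    placeHom hij Y = place k F m i j Y := rfl

theorem placeHom_tmul_one {i j : Fin (m + 2)} (hij : i ≠ j) (a : F) :
    placeHom (k := k) hij (a ⊗ₜ 1) = ins k F m i a := by
  rw [placeHom_apply, place_tmul, ins_one, mul_one]

theorem placeHom_one_tmul {i j : Fin (m + 2)} (hij : i ≠ j) (a : F) :
    placeHom (k := k) hij (1 ⊗ₜ a) = ins k F m j a := by
  rw [placeHom_apply, place_tmul, ins_one, one_mul]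

theorem slotPerm_place (w : Equiv.Perm (Fin (m + 2))) (i j : Fin (m + 2)) (Y : F ⊗[k] F) :
    slotPerm k F _ w (place k F m i j Y) = place k F m (w i) (w j) Y := by
  induction Y using TensorProduct.induction_on with
  | zero => simp only [map_zero]
  | add Y Z hY hZ => simp only [map_add, hY, hZ]
  | tmul a b => simp only [place_tmul, map_mul, slotPerm_ins]

theorem place_comm {i j : Fin (m + 2)} (hij : i ≠ j) (Y : F ⊗[k] F) :
    place k F m j i (Algebra.TensorProduct.comm k F F Y) = place k F m i j Y := by
  induction Y using TensorProduct.induction_on with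
  | zero => simp only [map_zero]
  | add Y Z hY hZ => simp only [map_add, hY, hZ]
  | tmul a b =>
    rw [Algebra.TensorProduct.comm_tmul, place_tmul, place_tmul, (ins_commute hij a b).eq]

theorem place_symm {Y : F ⊗[k] F} (hY : IsSymmEl k F Y) {i j : Fin (m + 2)}
    (hij : i ≠ j) : place k F m i j Y = place k F m j i Y := by
  rw [← place_comm hij, hY]

theorem place_commute_ins {i j l : Fin (m + 2)} (hil : i ≠ l) (hjl : j ≠ l) (Y : F ⊗[k] F)
    (a : F) : Commute (place k F m i j Y) (ins k F m l a) := by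
  induction Y using TensorProduct.induction_on with
  | zero => rw [map_zero]; exact Commute.zero_left _
  | add Y Z hY hZ => rw [map_add]; exact hY.add_left hZ
  | tmul b c => exact (ins_commute hil b a).mul_left (ins_commute hjl c a)

theorem place_mul_eq_map_mul {i j : Fin (m + 2)} {Y : F ⊗[k] F}
    {f : TPow k F m →ₐ[k] TPow k F m}
    (hi : ∀ a, place k F m i j Y * ins k F m i a = f (ins k F m i a) * place k F m i j Y)
    (hj : ∀ a, place k F m i j Y * ins k F m j a = f (ins k F m j a) * place k F m i j Y)
    (h_other : ∀ l, i ≠ l → j ≠ l → ∀ a, f (ins k F m l a) = ins k F m l a) (y : TPow k F m) :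
    place k F m i j Y * y = f y * place k F m i j Y := by
  refine mul_eq_map_mul_of_adjoin_eq_top adjoin_iUnion_range_singleAlgHom ?_ y
  simp only [Set.mem_iUnion, Set.mem_range, forall_exists_index]
  rintro _ l a rfl
  change _ * ins k F m l a = f (ins k F m l a) * _
  by_cases hil : i = l
  · exact hil ▸ hi a
  by_cases hjl : j = l
  · exact hjl ▸ hj a
  rw [h_other l hil hjl, (place_commute_ins hil hjl Y a).eq]

theorem place_mul {Y : F ⊗[k] F} (hY : IsWeakFrobenius k F Y)
    {i j : Fin (m + 2)} (hij : i ≠ j) (y : TPow k F m) :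
    place k F m i j Y * y = slotPerm k F _ (Equiv.swap i j) y * place k F m i j Y := by
  refine place_mul_eq_map_mul (fun a => ?_) (fun a => ?_) (fun l hil hjl a => ?_) y
  · rw [slotPerm_ins, Equiv.swap_apply_left, ← placeHom_tmul_one hij, ← placeHom_one_tmul hij,
      ← placeHom_apply hij, ← map_mul, ← map_mul, hY]
  · rw [slotPerm_ins, Equiv.swap_apply_right, ← placeHom_tmul_one hij, ← placeHom_one_tmul hij,
      ← placeHom_apply hij, ← map_mul, ← map_mul, hY]
  · rw [slotPerm_ins, Equiv.swap_apply_of_ne_of_ne hil.symm hjl.symm]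

theorem place_commute {Y : F ⊗[k] F} (hY : ∀ z, Commute Y z) {i j : Fin (m + 2)} (hij : i ≠ j)
    (y : TPow k F m) : Commute (place k F m i j Y) y := by
  refine place_mul_eq_map_mul (f := AlgHom.id k _) (fun a => ?_) (fun a => ?_)
    (fun _ _ _ _ => rfl) y
  · rw [← placeHom_tmul_one hij, ← placeHom_apply hij]
    exact (hY _).map (placeHom hij)
  · rw [← placeHom_one_tmul hij, ← placeHom_apply hij]
    exact (hY _).map (placeHom hij)

/-- The placement of `Y ∈ F ⊗ (F ⊗ F)` with its legs in tensor slots `a`, `b` and `c`. -/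
noncomputable def placeThree (a b c : Fin (m + 2)) : F ⊗[k] (F ⊗[k] F) →ₗ[k] TPow k F m :=
  TensorProduct.lift
    ((LinearMap.mul k (TPow k F m)).compl₁₂ (ins k F m a) (place k F m b c))

theorem placeThree_emb12_mul_emb23 (a b c : Fin (m + 2)) (Y Z : F ⊗[k] F) :
    placeThree a b c (emb12 k F Y * emb23 k F Z) = place k F m a b Y * place k F m b c Z := by
  induction Y using TensorProduct.induction_on with
  | zero => simp only [map_zero, zero_mul]
  | add Y Y' hY hY' => simp only [map_add, add_mul, hY, hY']
  | tmul p q =>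
    induction Z using TensorProduct.induction_on with
    | zero => simp only [map_zero, mul_zero]
    | add Z Z' hZ hZ' => simp only [map_add, mul_add, hZ, hZ']
    | tmul r s =>
      have h_mul : emb12 k F (p ⊗ₜ q) * emb23 k F (r ⊗ₜ s) = p ⊗ₜ ((q * r) ⊗ₜ s) := by
        simp [emb12, emb23]
      have h_place : placeThree a b c (p ⊗ₜ[k] ((q * r) ⊗ₜ[k] s)) =
        ins k F m a p * (ins k F m b (q * r) * ins k F m c s) := rfl
      rw [h_mul, h_place, ins_mul, place_tmul, place_tmul]
      simp only [mul_assoc]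

theorem place_mul_place_eq {Y Z Y' Z' : F ⊗[k] F}
    (h : emb12 k F Y * emb23 k F Z = emb12 k F Y' * emb23 k F Z') (a b c : Fin (m + 2)) :
    place k F m a b Y * place k F m b c Z = place k F m a b Y' * place k F m b c Z' := by
  rw [← placeThree_emb12_mul_emb23, h, placeThree_emb12_mul_emb23]

end TensorPower

section RationalFunctions

variable (k ι : Type*) [Field k]

/-- The field of rational functions in the variables `x_i`. -/
abbrev RatFuncs := FractionRing (MvPolynomial ι k)

variable {ι}

/-- The variable `x_i` as a rational function. -/
noncomputable def ratX (i : ι) : RatFuncs k ι := algebraMap (MvPolynomial ι k) _ (X i)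

theorem ratX_injective : Function.Injective (ratX k (ι := ι)) :=
  (IsFractionRing.injective (MvPolynomial ι k) (RatFuncs k ι)).comp (X_injective (R := k))

variable (ι)

/-- The inclusion of the polynomials in the rational functions. -/
noncomputable def polyToRat : MvPolynomial ι k →ₐ[k] RatFuncs k ι :=
  IsScalarTower.toAlgHom k (MvPolynomial ι k) (RatFuncs k ι)

theorem polyToRat_injective : Function.Injective (polyToRat k ι) :=
  IsFractionRing.injective (MvPolynomial ι k) (RatFuncs k ι)

variable {k ι}

theorem polyToRat_X (i : ι) : polyToRat k ι (X i) = ratX k i := rfl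

theorem ratFuncs_algHom_ext {f g : RatFuncs k ι →ₐ[k] RatFuncs k ι}
    (h : ∀ p, f (polyToRat k ι p) = g (polyToRat k ι p)) : f = g :=
  AlgHom.coe_ringHom_injective (IsFractionRing.ringHom_ext (A := MvPolynomial ι k) h)

/-- The automorphism of the field of rational functions which permutes the variables by `w`. -/
noncomputable def varPermHom (w : Equiv.Perm ι) : RatFuncs k ι →ₐ[k] RatFuncs k ι :=
  IsFractionRing.liftAlgHom (A := MvPolynomial ι k) (g := (polyToRat k ι).comp (rename w))
    ((polyToRat_injective k ι).comp (rename_injective w w.injective))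

theorem varPermHom_polyToRat (w : Equiv.Perm ι) (p : MvPolynomial ι k) :
    varPermHom w (polyToRat k ι p) = polyToRat k ι (rename w p) :=
  IsFractionRing.lift_algebraMap (A := MvPolynomial ι k)
    (g := ((polyToRat k ι).comp (rename w)).toRingHom)
    ((polyToRat_injective k ι).comp (rename_injective w w.injective)) p

variable (k ι)

/-- The action of permutations on the field of rational functions. -/
noncomputable def varPerm : Equiv.Perm ι →* (RatFuncs k ι →ₐ[k] RatFuncs k ι) where
  toFun := varPermHom
  map_one' := ratFuncs_algHom_ext fun p => by
    rw [varPermHom_polyToRat, Equiv.Perm.coe_one, rename_id_apply, AlgHom.one_apply]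
  map_mul' v w := ratFuncs_algHom_ext fun p => by
    simp only [AlgHom.mul_apply, varPermHom_polyToRat, rename_rename]
    rfl

variable {k ι}

theorem varPerm_polyToRat (w : Equiv.Perm ι) (p : MvPolynomial ι k) :
    varPerm k ι w (polyToRat k ι p) = polyToRat k ι (rename w p) := varPermHom_polyToRat w p

theorem varPerm_ratX (w : Equiv.Perm ι) (i : ι) : varPerm k ι w (ratX k i) = ratX k (w i) := by
  rw [← polyToRat_X, varPerm_polyToRat, rename_X, polyToRat_X]

end RationalFunctions

/-- Extension of scalars of the endomorphisms of an algebra. -/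
noncomputable def baseChangeEnd (R K A : Type*) [CommRing R] [CommRing K] [Algebra R K] [Ring A]
    [Algebra R A] : (A →ₐ[R] A) →* (K ⊗[R] A →ₐ[K] K ⊗[R] A) where
  toFun := Algebra.TensorProduct.map (AlgHom.id K K)
  map_one' := Algebra.TensorProduct.map_id
  map_mul' _ _ := Algebra.TensorProduct.ext_ring (AlgHom.ext fun _ => rfl)

section LocalizedBase

variable [Field k] [Ring F] [Algebra k F]

/-- The localization `F^{⊗d}(x₁, …, x_d)` of `B^{⊗d}`. -/
abbrev LocBD := RatFuncs k (Fin (m + 2)) ⊗[k] TPow k F m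

/-- The action of permutations on `F^{⊗d}(x₁, …, x_d)`, on the slots and on the variables. -/
noncomputable def locPerm : Equiv.Perm (Fin (m + 2)) →* (LocBD k F m →ₐ[k] LocBD k F m) where
  toFun w := Algebra.TensorProduct.map (varPerm k _ w) (slotPerm k F _ w)
  map_one' := by
    rw [map_one, map_one]
    exact Algebra.TensorProduct.map_id
  map_mul' v w := by
    rw [map_mul, map_mul]
    exact Algebra.TensorProduct.map_comp _ _ _ _

/-- The action of permutations on the slots of `F^{⊗d}(x₁, …, x_d)`, fixing the variables. -/
noncomputable def locSlotPerm :
    Equiv.Perm (Fin (m + 2)) →* (LocBD k F m →ₐ[RatFuncs k (Fin (m + 2))] LocBD k F m) :=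
  (baseChangeEnd k _ _).comp (slotPerm k F _)

/-- The inclusion of `B^{⊗d}` in `F^{⊗d}(x₁, …, x_d)`. -/
noncomputable def toLocBD : BD k F m →ₐ[k] LocBD k F m :=
  (Algebra.TensorProduct.map (polyToRat k _) (AlgHom.id k (TPow k F m))).comp
    (Algebra.TensorProduct.comm k (TPow k F m) (MvPolynomial (Fin (m + 2)) k)).toAlgHom

theorem toLocBD_injective : Function.Injective (toLocBD k F m) := by
  have h : Function.Injective
      (Algebra.TensorProduct.map (polyToRat k _) (AlgHom.id k (TPow k F m))) :=
    Module.Flat.rTensor_preserves_injective_linearMap (M := TPow k F m)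
      (polyToRat k (Fin (m + 2))).toLinearMap (polyToRat_injective k _)
  exact h.comp
    (Algebra.TensorProduct.comm k (TPow k F m) (MvPolynomial (Fin (m + 2)) k)).injective

variable {k F m}

theorem locPerm_tmul (w : Equiv.Perm (Fin (m + 2))) (c : RatFuncs k (Fin (m + 2)))
    (t : TPow k F m) : locPerm k F m w (c ⊗ₜ t) = varPerm k _ w c ⊗ₜ slotPerm k F _ w t := rfl

theorem locSlotPerm_tmul (w : Equiv.Perm (Fin (m + 2))) (c : RatFuncs k (Fin (m + 2)))
    (t : TPow k F m) : locSlotPerm k F m w (c ⊗ₜ t) = c ⊗ₜ slotPerm k F _ w t := rfl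

theorem locPerm_smul (w : Equiv.Perm (Fin (m + 2))) (c : RatFuncs k (Fin (m + 2)))
    (y : LocBD k F m) : locPerm k F m w (c • y) = varPerm k _ w c • locPerm k F m w y := by
  induction y using TensorProduct.induction_on with
  | zero => simp only [smul_zero, map_zero]
  | add x y hx hy => simp only [smul_add, map_add, hx, hy]
  | tmul d t =>
    simp only [TensorProduct.smul_tmul', locPerm_tmul, smul_eq_mul, map_mul]

theorem toLocBD_tmul (t : TPow k F m) (p : MvPolynomial (Fin (m + 2)) k) :
    toLocBD k F m (t ⊗ₜ p) = polyToRat k _ p ⊗ₜ t := rfl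

theorem toLocBD_tmul_eq_smul (t : TPow k F m) (p : MvPolynomial (Fin (m + 2)) k) :
    toLocBD k F m (t ⊗ₜ p) = polyToRat k _ p • (1 : RatFuncs k (Fin (m + 2))) ⊗ₜ t := by
  rw [toLocBD_tmul, TensorProduct.smul_tmul', smul_eq_mul, mul_one]

theorem toLocBD_sigmaB (i : Fin (m + 1)) (b : BD k F m) :
    toLocBD k F m (sigmaB k F m i b) = locPerm k F m (swPerm m i) (toLocBD k F m b) := by
  induction b using TensorProduct.induction_on with
  | zero => simp only [map_zero]
  | add x y hx hy => simp only [map_add, hx, hy]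
  | tmul t p =>
    rw [toLocBD_tmul, locPerm_tmul, varPerm_polyToRat, slotPerm_swPerm, ← toLocBD_tmul]
    rfl

theorem toLocBD_xv_mul (i : Fin (m + 2)) (b : BD k F m) :
    toLocBD k F m (xv k F m i * b) = ratX k i • toLocBD k F m b := by
  rw [map_mul, xv, toLocBD_tmul_eq_smul, ← Algebra.TensorProduct.one_def, smul_mul_assoc, one_mul,
    polyToRat_X]

theorem toLocBD_xv_sub_xv_mul (i j : Fin (m + 2)) (b : BD k F m) :
    toLocBD k F m ((xv k F m i - xv k F m j) * b) =
      (ratX k i - ratX k j) • toLocBD k F m b := by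
  rw [sub_mul, map_sub, toLocBD_xv_mul, toLocBD_xv_mul]
  exact (sub_smul _ _ _).symm

/-- The placement of `Y ∈ F ⊗ F` in the slots `i` and `j` of `F^{⊗d}(x₁, …, x_d)`. -/
noncomputable def locPlace (Y : F ⊗[k] F) (i j : Fin (m + 2)) : LocBD k F m :=
  1 ⊗ₜ place k F m i j Y

variable {Y : F ⊗[k] F}

theorem isEquivariant_locPerm_locPlace (Y : F ⊗[k] F) :
    IsEquivariant (locPerm k F m) (locPlace Y) := fun w i j => by
  rw [locPlace, locPerm_tmul, slotPerm_place, map_one, locPlace]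

theorem isEquivariant_locSlotPerm_locPlace (Y : F ⊗[k] F) :
    IsEquivariant (locSlotPerm k F m) (locPlace Y) := fun w i j => by
  rw [locPlace, locSlotPerm_tmul, slotPerm_place, locPlace]

theorem locPlace_symm (hY : IsSymmEl k F Y) {i j : Fin (m + 2)} (hij : i ≠ j) :
    locPlace Y i j = locPlace Y j i := by
  rw [locPlace, place_symm hY hij, locPlace]

theorem locPlace_commute (hY : ∀ z, Commute Y z) {i j : Fin (m + 2)} (hij : i ≠ j)
    (y : LocBD k F m) : Commute (locPlace Y i j) y := by
  induction y using TensorProduct.induction_on with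
  | zero => exact Commute.zero_right _
  | add x y hx hy => exact hx.add_right hy
  | tmul c t => exact (Commute.one_left c).tmul (place_commute hY hij t)

theorem isFrobeniusFamily_locPlace (hY : IsWeakFrobenius k F Y) (hs : IsSymmEl k F Y) :
    IsFrobeniusFamily (locSlotPerm k F m) (locPlace Y) where
  equivariant := isEquivariant_locSlotPerm_locPlace Y
  symm := locPlace_symm hs
  mul_eq {i j} hij y := by
    induction y using TensorProduct.induction_on with
    | zero => simp only [map_zero, mul_zero, zero_mul]
    | add x y hx hy => simp only [map_add, mul_add, add_mul, hx, hy]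
    | tmul c t =>
      rw [locPlace, locSlotPerm_tmul, Algebra.TensorProduct.tmul_mul_tmul,
        Algebra.TensorProduct.tmul_mul_tmul, place_mul hY hij, mul_one, one_mul]

variable {Δf : Fin 2 → Fin 2 → F ⊗[k] F}

theorem isFrobeniusDatum_locPlace (hwf : ∀ i j, IsWeakFrobenius k F (Δf i j))
    (hsym : ∀ i j, IsSymmEl k F (Δf i j))
    (hA2 : emb12 k F (Δf 0 0) * emb23 k F (Δf 1 1) =
      emb12 k F (Δf 0 1) * emb23 k F (Δf 1 0)) :
    IsFrobeniusDatum (locSlotPerm k F m) fun p q => locPlace (Δf p q) where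
  frobenius p q := isFrobeniusFamily_locPlace (hwf p q) (hsym p q)
  mul_eq _ _ _ := by
    simp only [locPlace, Algebra.TensorProduct.tmul_mul_tmul, place_mul_place_eq hA2]

theorem toLocBD_betaI (i : Fin (m + 1)) : toLocBD k F m (betaI k F m Δf i) =
    betaFamily (fun p q => locPlace (Δf p q)) (ratX k i.castSucc) (ratX k i.succ)
      i.castSucc i.succ := by
  simp only [betaI, map_add, toLocBD_tmul_eq_smul, map_one, map_mul, one_smul, polyToRat_X]
  rfl

theorem toLocBD_SI (i : Fin (m + 1)) : toLocBD k F m (SI k F m Δf i) =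
    locPlace (Δf 1 0) i.castSucc i.succ - locPlace (Δf 0 1) i.castSucc i.succ := by
  rw [SI, map_sub, toLocBD_tmul, map_one, TensorProduct.tmul_sub, locPlace, locPlace]

theorem toLocBD_RI (Rv : F ⊗[k] F) (i : Fin (m + 1)) :
    toLocBD k F m (RI k F m Rv i) = locPlace Rv i.castSucc i.succ := by
  rw [RI, toLocBD_tmul, map_one, locPlace]

theorem isEquivariant_dividedBeta_locPlace :
    IsEquivariant (locPerm k F m) (dividedBeta (fun p q => locPlace (Δf p q)) (ratX k)) :=
  IsEquivariant.dividedBeta (κ := fun w => (varPerm k _ w).toRingHom) locPerm_smul varPerm_ratX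
    fun p q => isEquivariant_locPerm_locPlace (Δf p q)

/-- The PBW model with `g_ij = β_ij / (x_i - x_j)` in `F^{⊗d}(x₁, …, x_d)`. -/
noncomputable def locModel {Rv : F ⊗[k] F} {ρf : Fin (m + 1) → BD k F m →ₗ[k] BD k F m}
    (hΔ : IsFrobeniusDatum (locSlotPerm k F m) fun p q => locPlace (Δf p q))
    (hRc : ∀ z, Commute Rv z) (hRs : IsSymmEl k F Rv)
    (hρ : ∀ (i : Fin (m + 1)) (a : BD k F m),
      (xv k F m i.castSucc - xv k F m i.succ) * ρf i a =
        betaI k F m Δf i * a - sigmaB k F m i a * betaI k F m Δf i) :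
    PBWModel k F m Δf Rv ρf (LocBD k F m) where
  φ := toLocBD k F m
  τ := locPerm k F m
  g := dividedBeta (fun p q => locPlace (Δf p q)) (ratX k)
  Q i j := locPlace Rv i j + dividedBeta (fun p q => locPlace (Δf p q)) (ratX k) j i *
    dividedBeta (fun p q => locPlace (Δf p q)) (ratX k) i j
  φ_injective := toLocBD_injective k F m
  φ_sigmaB := toLocBD_sigmaB
  isBraidDatum := hΔ.isBraidDatum_dividedBeta (ratX_injective k) isEquivariant_dividedBeta_locPlace
    (isEquivariant_locPerm_locPlace Rv) (isEquivariant_locSlotPerm_locPlace Rv)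
    (fun _ _ => locPlace_symm hRs) (fun _ _ => locPlace_commute hRc)
  φ_SI i := by
    rw [toLocBD_SI, hΔ.dividedBeta_add_dividedBeta (ratX_injective k) Fin.castSucc_lt_succ.ne]
  Q_eq i := by rw [toLocBD_RI]
  g_mul_φ i b := by
    refine dividedBeta_mul_eq (ratX_injective k) Fin.castSucc_lt_succ.ne ?_
    rw [← toLocBD_betaI, ← map_mul, ← map_mul, ← map_sub, ← hρ]
    exact (toLocBD_xv_sub_xv_mul _ _ _).symm

end LocalizedBase

end QuantumWreath

theorem stmt14_general [Field k] [Ring F] [Algebra k F]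
    (Δf : Fin 2 → Fin 2 → F ⊗[k] F)
    (hwf : ∀ i j, IsWeakFrobenius k F (Δf i j))
    (hsym : ∀ i j, IsSymmEl k F (Δf i j))
    (hA2 : emb12 k F (Δf 0 0) * emb23 k F (Δf 1 1) =
      emb12 k F (Δf 0 1) * emb23 k F (Δf 1 0))
    (Rv : F ⊗[k] F) (hRc : ∀ z, Rv * z = z * Rv) (hRs : IsSymmEl k F Rv)
    (ρf : Fin (m + 1) → BD k F m →ₗ[k] BD k F m)
    (hρ : ∀ (i : Fin (m + 1)) (a : BD k F m),
      (xv k F m i.castSucc - xv k F m i.succ) * ρf i a =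
        betaI k F m Δf i * a - sigmaB k F m i a * betaI k F m Δf i)
    (HwF : Equiv.Perm (Fin (m + 2)) → QWP k F m Δf Rv ρf)
    (hHw : ∀ w L, IsReducedWord m L w →
      HwF w = (L.map (genH k F m Δf Rv ρf)).prod) :
    Function.Bijective (fun f : Equiv.Perm (Fin (m + 2)) →₀ BD k F m =>
      f.sum fun w b => embB k F m Δf Rv ρf b * HwF w) ∧
    Function.Bijective (fun f : Equiv.Perm (Fin (m + 2)) →₀ BD k F m =>
      f.sum fun w b => HwF w * embB k F m Δf Rv ρf b) := by
  have M := QuantumWreath.locModel (QuantumWreath.isFrobeniusDatum_locPlace hwf hsym hA2) hRc hRs hρ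
  exact ⟨⟨M.pbwLeft_injective hHw, QuantumWreath.pbwLeft_surjective hHw⟩,
    ⟨M.pbwRight_injective hHw, QuantumWreath.pbwRight_surjective hHw⟩⟩

/-- **PBW theorem for quantum wreath products of polynomial type.**  The maps
`b ⊗ w ↦ b·H_w` and `b ⊗ w ↦ H_w·b` from `B^{⊗d} ⊗ 𝕜[S_d]` (modelled as finitely
supported `B^{⊗d}`-valued functions on `S_d`) to `B ≀ H(d)` are bijective. -/
theorem stmt14 [Field k] [Ring F] [Algebra k F] [FiniteDimensional k F]
    (Δf : Fin 2 → Fin 2 → F ⊗[k] F)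
    (hwf : ∀ i j, IsWeakFrobenius k F (Δf i j))
    (hsym : ∀ i j, IsSymmEl k F (Δf i j))
    (hA2 : emb12 k F (Δf 0 0) * emb23 k F (Δf 1 1) =
      emb12 k F (Δf 0 1) * emb23 k F (Δf 1 0))
    (Rv : F ⊗[k] F) (hRc : ∀ z, Rv * z = z * Rv) (hRs : IsSymmEl k F Rv)
    (ρf : Fin (m + 1) → BD k F m →ₗ[k] BD k F m)
    (hρ : ∀ (i : Fin (m + 1)) (a : BD k F m),
      (xv k F m i.castSucc - xv k F m i.succ) * ρf i a =
        betaI k F m Δf i * a - sigmaB k F m i a * betaI k F m Δf i)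
    -- `H_w`, for any choice of reduced expression
    (HwF : Equiv.Perm (Fin (m + 2)) → QWP k F m Δf Rv ρf)
    (hHw : ∀ w L, IsReducedWord m L w →
      HwF w = (L.map (genH k F m Δf Rv ρf)).prod) :
    Function.Bijective (fun f : Equiv.Perm (Fin (m + 2)) →₀ BD k F m =>
      f.sum fun w b => embB k F m Δf Rv ρf b * HwF w) ∧
    Function.Bijective (fun f : Equiv.Perm (Fin (m + 2)) →₀ BD k F m =>
      f.sum fun w b => HwF w * embB k F m Δf Rv ρf b) := by
  exact stmt14_general k F m Δf hwf hsym hA2 Rv hRc hRs ρf hρ HwF hHw
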